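/- For integers n, m ≥ 3 and positive integers k₁, k₂: d_{2k₁,2k₂} ≤ (Vol S̃q / Vol B_𝓜)^{1/D_𝓜} ≤ e_{2k₁,2k₂}, where in the case k₁ = k₂ = 1: d = 2^{−8}·6^{−1/2}·√(nm+n+m)/((n+4)(m+4)) and e = 2^{10}·√6/√(nm+n+m); and otherwise: d = (k₁!·k₂!)^{3/2}/(2√6·4^{2k₁+2k₂}·√((2k₁)!·(2k₂)!)) · n^{k₁/2}·m^{k₂/2}/((n/2+2k₁)^{k₁}·(m/2+2k₂)^{k₂}) and e = 2√6·4^{2k₁+2k₂}·√((2k₁)!·(2k₂)!/(k₁!·k₂!))·n^{−k₁/2}·m^{−k₂/2}. -/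

import Mathlib

open MeasureTheory MvPolynomial

noncomputable section

namespace BiformPaper

/-- The weight function on the variables: the `x`-variables get weight `(1,0)` and the
`y`-variables get weight `(0,1)`. -/
def bw (n m : ℕ) : Fin n ⊕ Fin m → ℕ × ℕ := Sum.elim (fun _ => (1, 0)) (fun _ => (0, 1))

/-- The set of biforms of bidegree `(k₁, k₂)`: real polynomials in
`x = (x₁, …, xₙ)` and `y = (y₁, …, y_m)`, homogeneous of degree `k₁` in `x` and of degree
`k₂` in `y`. -/
def Biform (n m k₁ k₂ : ℕ) : Set (MvPolynomial (Fin n ⊕ Fin m) ℝ) :=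
  {f | MvPolynomial.IsWeightedHomogeneous (bw n m) f (k₁, k₂)}

/-- Evaluation of a polynomial at a point `(x, y) ∈ ℝⁿ × ℝᵐ`. -/
def beval {n m : ℕ} (f : MvPolynomial (Fin n ⊕ Fin m) ℝ) (x : Fin n → ℝ) (y : Fin m → ℝ) : ℝ :=
  eval (Sum.elim x y) f

/-- The Euclidean unit sphere `S^{n-1}` in `ℝⁿ`. -/
def unitSphere (n : ℕ) : Set (Fin n → ℝ) := {x | ∑ i, x i ^ 2 = 1}

/-- `σ` is the normalized uniform measure on the unit sphere `S^{n-1} ⊆ ℝⁿ`, i.e., the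
unique rotation-invariant Borel probability measure concentrated on the sphere. -/
structure IsSphereMeasure (n : ℕ) (σ : Measure (Fin n → ℝ)) : Prop where
  prob : IsProbabilityMeasure σ
  onSphere : σ (unitSphere n)ᶜ = 0
  invariant : ∀ Q : Matrix (Fin n) (Fin n) ℝ, Q * Q.transpose = 1 → σ.map Q.mulVec = σ

/-- The average `∫_T f dσ` of `f` over `T = S^{n-1} × S^{m-1}` (with `σ` the product of the
normalized sphere measures `σ₁`, `σ₂`). -/
def bavg {n m : ℕ} (σ₁ : Measure (Fin n → ℝ)) (σ₂ : Measure (Fin m → ℝ))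
    (f : MvPolynomial (Fin n ⊕ Fin m) ℝ) : ℝ :=
  ∫ x, ∫ y, beval f x y ∂σ₂ ∂σ₁

/-- The `L²(σ)` inner product `⟨f, g⟩ = ∫_T f·g dσ` on biforms. -/
def bip {n m : ℕ} (σ₁ : Measure (Fin n → ℝ)) (σ₂ : Measure (Fin m → ℝ))
    (f g : MvPolynomial (Fin n ⊕ Fin m) ℝ) : ℝ :=
  ∫ x, ∫ y, beval f x y * beval g x y ∂σ₂ ∂σ₁

/-- The cone `Pos^{(n,m)}_{(2k₁,2k₂)}` of nonnegative biforms of bidegree `(2k₁, 2k₂)`. -/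
def PosSet (n m k₁ k₂ : ℕ) : Set (MvPolynomial (Fin n ⊕ Fin m) ℝ) :=
  {f | f ∈ Biform n m (2 * k₁) (2 * k₂) ∧ ∀ x y, 0 ≤ beval f x y}

/-- The cone `Sq^{(n,m)}_{(2k₁,2k₂)}` of finite sums of squares of biforms of bidegree
`(k₁, k₂)`. -/
def SqSet (n m k₁ k₂ : ℕ) : Set (MvPolynomial (Fin n ⊕ Fin m) ℝ) :=
  {f | ∃ (N : ℕ) (g : Fin N → MvPolynomial (Fin n ⊕ Fin m) ℝ),
      (∀ i, g i ∈ Biform n m k₁ k₂) ∧ f = ∑ i, g i ^ 2}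

/-- The cone `Lf^{(n,m)}_{(2k₁,2k₂)}` of finite sums of products
`ℓᵢ(x)^{2k₁} · ℓ′ᵢ(y)^{2k₂}` of even powers of linear forms. -/
def LfSet (n m k₁ k₂ : ℕ) : Set (MvPolynomial (Fin n ⊕ Fin m) ℝ) :=
  {f | ∃ (N : ℕ) (a : Fin N → Fin n → ℝ) (b : Fin N → Fin m → ℝ),
      f = ∑ r, (∑ i, C (a r i) * X (Sum.inl i)) ^ (2 * k₁) *
               (∑ j, C (b r j) * X (Sum.inr j)) ^ (2 * k₂)}

/-- The biform `q = (x₁² + ⋯ + xₙ²)^{k₁} · (y₁² + ⋯ + y_m²)^{k₂}`. -/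
def qpoly (n m k₁ k₂ : ℕ) : MvPolynomial (Fin n ⊕ Fin m) ℝ :=
  (∑ i : Fin n, X (Sum.inl i) ^ 2) ^ k₁ * (∑ j : Fin m, X (Sum.inr j) ^ 2) ^ k₂

/-- The hyperplane `𝓜` of biforms of bidegree `(2k₁, 2k₂)` with average `0` on `T`. -/
def MSet (n m k₁ k₂ : ℕ) (σ₁ : Measure (Fin n → ℝ)) (σ₂ : Measure (Fin m → ℝ)) :
    Set (MvPolynomial (Fin n ⊕ Fin m) ℝ) :=
  {f | f ∈ Biform n m (2 * k₁) (2 * k₂) ∧ bavg σ₁ σ₂ f = 0}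

/-- The translated section `K̃ = {f ∈ 𝓜 : f + q ∈ K}` of a cone `K`. -/
def tilde (n m k₁ k₂ : ℕ) (σ₁ : Measure (Fin n → ℝ)) (σ₂ : Measure (Fin m → ℝ))
    (K : Set (MvPolynomial (Fin n ⊕ Fin m) ℝ)) : Set (MvPolynomial (Fin n ⊕ Fin m) ℝ) :=
  {f | f ∈ MSet n m k₁ k₂ σ₁ σ₂ ∧ f + qpoly n m k₁ k₂ ∈ K}

/-- The unit ball `B_𝓜` of `𝓜` in the `L²(σ)` norm. -/
def bball (n m k₁ k₂ : ℕ) (σ₁ : Measure (Fin n → ℝ)) (σ₂ : Measure (Fin m → ℝ)) :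
    Set (MvPolynomial (Fin n ⊕ Fin m) ℝ) :=
  {f | f ∈ MSet n m k₁ k₂ σ₁ σ₂ ∧ bip σ₁ σ₂ f f ≤ 1}

/-- `ψ : ℝ^D → Mset` is a unitary isomorphism: an injective linear map with range `Mset`
carrying the standard inner product of `ℝ^D` to the `L²(σ)` inner product.  Volumes of
Borel subsets `E` of `Mset` are computed as the Lebesgue measure of `ψ ⁻¹' E`
(by Lemma 1.1 of the paper this does not depend on the choice of `ψ`). -/
structure IsUnitaryParam (n m D : ℕ) (σ₁ : Measure (Fin n → ℝ)) (σ₂ : Measure (Fin m → ℝ))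
    (Mset : Set (MvPolynomial (Fin n ⊕ Fin m) ℝ))
    (ψ : (Fin D → ℝ) →ₗ[ℝ] MvPolynomial (Fin n ⊕ Fin m) ℝ) : Prop where
  inj : Function.Injective ψ
  range : Set.range ψ = Mset
  ip : ∀ a b : Fin D → ℝ, bip σ₁ σ₂ (ψ a) (ψ b) = ∑ i, a i * b i

/-- The apolar inner product `⟨r, s⟩_d = D_r(s)` on biforms, where `D_r` is the
differential operator obtained from `r` by replacing each variable by the corresponding
partial derivative; its value on a pair of forms of the same bidegree is
`∑_α r_α · s_α · α!`. -/
def apolar {n m : ℕ} (r s : MvPolynomial (Fin n ⊕ Fin m) ℝ) : ℝ :=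
  ∑ α ∈ r.support, coeff α r * coeff α s * α.prod fun _ k => (k.factorial : ℝ)

end BiformPaper

/-!
Averages over spheres are, up to explicit factors, Gaussian moments, and Gaussian hypercontractivity
gives `‖f * g‖ ≤ 4 ^ (a + b) * ‖f‖ * ‖g‖` in `L²(σ)` for biforms `f`, `g` of bidegree `(a, b)`. In a
space of dimension `P` the unit ball lies in the convex hull of `5 ^ P` points of norm at most `2`,
so the squares of unit biforms lie in the convex hull of `25 ^ P` products of biforms, all of norm
at most `4 * 4 ^ (a + b)`.

Upper bound: the section is contained in the convex hull of the projections of these products. By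
Maurey's empirical argument every point of the hull is within distance of order `1 / √s` of an
average of `s` of them, so `25 ^ (P * s)` balls cover the section; take `s` of order `D / P`.

Lower bound: apolarity embeds the dual of the cone of sums of squares in the cone itself, so a mean
zero `f` lies in the section as soon as it is not too negative, in the apolar inner product, on the
same products. These are `25 ^ P` halfspaces, each of which removes only an exponentially small part
of a ball whose radius is of order `√(D / P)` times the distance to the bounding hyperplanes.
-/

namespace BiformPaper

section Algebra

variable {ι : Type*}

lemma exists_eq_C_of_isHomogeneous_zero {u : MvPolynomial ι ℝ} (hu : u.IsHomogeneous 0) :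
    ∃ c, u = C c := by
  rw [← totalDegree_zero_iff_isHomogeneous, totalDegree_eq_zero_iff_eq_C] at hu
  exact ⟨_, hu⟩

lemma pderiv_eq_zero_of_isHomogeneous_zero {u : MvPolynomial ι ℝ} (hu : u.IsHomogeneous 0)
    (i : ι) : pderiv i u = 0 := by
  obtain ⟨c, rfl⟩ := exists_eq_C_of_isHomogeneous_zero hu
  exact pderiv_C

lemma smul_eq_sum_X_mul_pderiv [Fintype ι] {e : ℕ} {u : MvPolynomial ι ℝ}
    (hu : u.IsHomogeneous e) : (e : ℝ) • u = ∑ i, X i * pderiv i u := by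
  rw [hu.sum_X_mul_pderiv, Nat.cast_smul_eq_nsmul]

lemma X_mul_monomial (i : ι) (s : ι →₀ ℕ) (a : ℝ) :
    X i * monomial s a = monomial (s + Finsupp.single i 1) a := by
  rw [X, monomial_mul, add_comm, one_mul]

lemma pderiv_comm (i j : ι) (f : MvPolynomial ι ℝ) :
    pderiv i (pderiv j f) = pderiv j (pderiv i f) := by
  have h : ⁅pderiv (R := ℝ) i, (pderiv j : Derivation ℝ (MvPolynomial ι ℝ) _)⁆ = 0 := by
    classical
    refine derivation_ext fun k => ?_
    simp [Derivation.commutator_apply, pderiv_X, Pi.single_apply, apply_ite]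
  have := congrArg (· f) h
  simpa [Derivation.commutator_apply, sub_eq_zero] using this

/-- The Laplacian `∑ i ∈ s, ∂ᵢ²` in the variables belonging to `s`. -/
def laplacian (s : Finset ι) : MvPolynomial ι ℝ →ₗ[ℝ] MvPolynomial ι ℝ :=
  ∑ i ∈ s, (pderiv i).toLinearMap ∘ₗ (pderiv i).toLinearMap

lemma laplacian_apply (s : Finset ι) (f : MvPolynomial ι ℝ) :
    laplacian s f = ∑ i ∈ s, pderiv i (pderiv i f) := by
  simp [laplacian]

lemma laplacian_pderiv (s : Finset ι) (i : ι) (f : MvPolynomial ι ℝ) :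
    laplacian s (pderiv i f) = pderiv i (laplacian s f) := by
  simp only [laplacian_apply, map_sum]
  exact Finset.sum_congr rfl fun j _ => by rw [pderiv_comm j i f, pderiv_comm j i]

lemma isHomogeneous_laplacian {e : ℕ} {u : MvPolynomial ι ℝ} (hu : u.IsHomogeneous e)
    (s : Finset ι) : (laplacian s u).IsHomogeneous (e - 2) := by
  rw [laplacian_apply]
  exact IsHomogeneous.sum _ _ _ fun i _ => hu.pderiv.pderiv

lemma laplacian_eq_zero_of_isHomogeneous {e : ℕ} {u : MvPolynomial ι ℝ} (hu : u.IsHomogeneous e)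
    (he : e < 2) (s : Finset ι) : laplacian s u = 0 := by
  have hdu : ∀ i, (pderiv i u).IsHomogeneous 0 := fun i => by
    simpa [show e - 1 = 0 by omega] using hu.pderiv (i := i)
  rw [laplacian_apply]
  exact Finset.sum_eq_zero fun i _ => pderiv_eq_zero_of_isHomogeneous_zero (hdu i) i

end Algebra

section CauchySchwarz

variable {A : Type*} [CommRing A] [Algebra ℝ A] {L : A →ₗ[ℝ] ℝ}

lemma apply_mul_sq_le (hL : ∀ f, 0 ≤ L (f * f)) (f g : A) :
    L (f * g) ^ 2 ≤ L (f * f) * L (g * g) := by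
  have := LinearMap.BilinForm.apply_mul_apply_le_of_forall_zero_le
    (B := (LinearMap.mul ℝ A).compr₂ L) (fun f => by simpa using hL f) f g
  simpa [mul_comm g f, sq] using this

lemma apply_mul_le_sqrt_mul_sqrt (hL : ∀ f, 0 ≤ L (f * f)) (f g : A) :
    L (f * g) ≤ √(L (f * f)) * √(L (g * g)) := by
  rw [← Real.sqrt_mul (hL f)]
  exact Real.le_sqrt_of_sq_le (apply_mul_sq_le hL f g)

end CauchySchwarz

/-! ### Gaussian moments and hypercontractivity -/

section Gaussian

open ProbabilityTheory

lemma hasDerivAt_gaussianPDFReal (x : ℝ) :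
    HasDerivAt (gaussianPDFReal 0 1) (-x * gaussianPDFReal 0 1 x) x := by
  have hpdf : gaussianPDFReal 0 1 = fun x : ℝ => (√(2 * Real.pi))⁻¹ * Real.exp (-x ^ 2 / 2) := by
    ext x; simp [gaussianPDFReal]
  rw [hpdf]
  have h := (((hasDerivAt_id x).pow 2).neg.div_const 2).exp.const_mul (√(2 * Real.pi))⁻¹
  refine h.congr_deriv ?_
  simp only [Pi.neg_apply, Pi.pow_apply, id]
  ring

lemma integrable_pow_gaussianReal (k : ℕ) :
    Integrable (fun x : ℝ => x ^ k) (gaussianReal 0 1) := by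
  have h := (memLp_id_gaussianReal (μ := 0) (v := 1) (k : NNReal)).integrable_norm_pow'
  exact (integrable_norm_iff (by fun_prop)).mp (by simpa using h)

lemma integrable_gaussianPDFReal_mul_pow (k : ℕ) :
    Integrable fun x : ℝ => gaussianPDFReal 0 1 x * x ^ k := by
  have h := integrable_pow_gaussianReal k
  rw [gaussianReal_of_var_ne_zero _ one_ne_zero,
    integrable_withDensity_iff_integrable_smul₀' (by fun_prop) (by simp [gaussianPDF])] at h
  simpa [gaussianPDF, toReal_gaussianPDF, gaussianPDFReal_nonneg] using h

lemma integral_pow_succ_gaussianReal (k : ℕ) :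
    ∫ x : ℝ, x ^ (k + 1) ∂(gaussianReal 0 1) = k * ∫ x : ℝ, x ^ (k - 1) ∂(gaussianReal 0 1) := by
  have parts := integral_mul_deriv_eq_deriv_mul_of_integrable
    (u := fun x : ℝ => x ^ k) (v := gaussianPDFReal 0 1) (u' := fun x => k * x ^ (k - 1))
    (v' := fun x => -x * gaussianPDFReal 0 1 x)
    (fun x _ => by simpa using hasDerivAt_pow k x) (fun x _ => hasDerivAt_gaussianPDFReal x)
    ((integrable_gaussianPDFReal_mul_pow (k + 1)).neg.congr
      (ae_of_all _ fun x => by simp only [Pi.mul_apply, Pi.neg_apply]; ring))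
    (((integrable_gaussianPDFReal_mul_pow (k - 1)).const_mul (k : ℝ)).congr
      (ae_of_all _ fun x => by simp only [Pi.mul_apply]; ring))
    ((integrable_gaussianPDFReal_mul_pow k).congr
      (ae_of_all _ fun x => by simp only [Pi.mul_apply]; ring))
  simp_rw [integral_gaussianReal_eq_integral_smul one_ne_zero, smul_eq_mul, ← integral_const_mul]
  calc ∫ x, gaussianPDFReal 0 1 x * x ^ (k + 1)
      = -∫ x, x ^ k * (-x * gaussianPDFReal 0 1 x) := by
        rw [← integral_neg]; congr 1; ext x; ring
    _ = ∫ x, k * x ^ (k - 1) * gaussianPDFReal 0 1 x := by rw [parts, neg_neg]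
    _ = ∫ x, k * (gaussianPDFReal 0 1 x * x ^ (k - 1)) := by congr 1; ext x; ring

variable {ι : Type*} [Fintype ι]

lemma integrable_eval_gaussian (f : MvPolynomial ι ℝ) :
    Integrable (fun x => eval x f) (Measure.pi fun _ : ι => gaussianReal 0 1) := by
  simp_rw [eval_eq']
  exact integrable_finsetSum _ fun d _ => (Integrable.fintype_prod
    (f := fun i (x : ℝ) => x ^ d i) fun i => integrable_pow_gaussianReal _).const_mul _

/-- The expectation of a polynomial in independent standard Gaussian variables. -/
def gaussianExpectation : MvPolynomial ι ℝ →ₗ[ℝ] ℝ where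
  toFun f := ∫ x, eval x f ∂Measure.pi fun _ : ι => gaussianReal 0 1
  map_add' f g := by
    simpa using integral_add (integrable_eval_gaussian f) (integrable_eval_gaussian g)
  map_smul' c f := by simp [smul_eval, integral_const_mul]

lemma gaussianExpectation_apply (f : MvPolynomial ι ℝ) :
    gaussianExpectation f = ∫ x, eval x f ∂Measure.pi fun _ : ι => gaussianReal 0 1 := rfl

@[simp]
lemma gaussianExpectation_C (c : ℝ) : gaussianExpectation (C c : MvPolynomial ι ℝ) = c := by
  simp [gaussianExpectation_apply]

lemma gaussianExpectation_mul_self_nonneg (f : MvPolynomial ι ℝ) :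
    0 ≤ gaussianExpectation (f * f) := by
  simp only [gaussianExpectation_apply, map_mul]
  exact integral_nonneg fun x => mul_self_nonneg _

lemma gaussianExpectation_monomial (s : ι →₀ ℕ) (a : ℝ) :
    gaussianExpectation (monomial s a) = a * ∏ i, ∫ x : ℝ, x ^ s i ∂gaussianReal 0 1 := by
  have heval : ∀ x : ι → ℝ, eval x (monomial s a) = a * ∏ i, x i ^ s i := fun x => by
    rw [eval_monomial, Finsupp.prod_fintype _ _ (by simp)]
  simp_rw [gaussianExpectation_apply, heval, integral_const_mul]
  rw [integral_fintype_prod_eq_prod (f := fun j (x : ℝ) => x ^ s j)]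

lemma gaussianExpectation_X_mul (i : ι) (f : MvPolynomial ι ℝ) :
    gaussianExpectation (X i * f) = gaussianExpectation (pderiv i f) := by
  classical
  induction f using MvPolynomial.induction_on' with
  | add p q hp hq => simp only [mul_add, map_add, hp, hq]
  | monomial s a =>
    rw [X_mul_monomial, pderiv_monomial, gaussianExpectation_monomial,
      gaussianExpectation_monomial, ← Finset.mul_prod_erase _ _ (Finset.mem_univ i),
      ← Finset.mul_prod_erase _ _ (Finset.mem_univ i)]
    have hne : ∀ j ∈ Finset.univ.erase i,
        (∫ x : ℝ, x ^ (s + Finsupp.single i 1 : ι →₀ ℕ) j ∂gaussianReal 0 1) =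
          ∫ x : ℝ, x ^ (s - Finsupp.single i 1 : ι →₀ ℕ) j ∂gaussianReal 0 1 := fun j hj => by
      simp [Finsupp.single_eq_of_ne (Finset.ne_of_mem_erase hj)]
    rw [Finset.prod_congr rfl hne]
    simp only [Finsupp.add_apply, Finsupp.single_eq_same, Finsupp.tsub_apply,
      integral_pow_succ_gaussianReal]
    ring

/-- The number operator `∑ᵢ (xᵢ ∂ᵢ - ∂ᵢ²)`, which generates the Ornstein–Uhlenbeck semigroup. -/
def numberOperator : MvPolynomial ι ℝ →ₗ[ℝ] MvPolynomial ι ℝ :=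
  ∑ i, LinearMap.mulLeft ℝ (X i) ∘ₗ (pderiv i).toLinearMap - laplacian Finset.univ

lemma numberOperator_apply (u : MvPolynomial ι ℝ) :
    numberOperator u = ∑ i, X i * pderiv i u - laplacian Finset.univ u := by
  simp [numberOperator]

lemma numberOperator_of_isHomogeneous {e : ℕ} {u : MvPolynomial ι ℝ} (hu : u.IsHomogeneous e) :
    numberOperator u = (e : ℝ) • u - laplacian Finset.univ u := by
  rw [numberOperator_apply, smul_eq_sum_X_mul_pderiv hu]

lemma pderiv_numberOperator (i : ι) (u : MvPolynomial ι ℝ) :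
    pderiv i (numberOperator u) = numberOperator (pderiv i u) + pderiv i u := by
  classical
  simp only [numberOperator_apply, map_sub, map_sum, pderiv_mul, pderiv_X, laplacian_pderiv,
    Finset.sum_add_distrib, pderiv_comm i, Pi.single_apply, ite_mul, one_mul, zero_mul,
    Finset.sum_ite_eq', Finset.mem_univ, if_true]
  ring

lemma gaussianExpectation_mul_numberOperator (v u : MvPolynomial ι ℝ) :
    gaussianExpectation (v * numberOperator u) =
      ∑ i, gaussianExpectation (pderiv i v * pderiv i u) := by
  rw [numberOperator_apply, laplacian_apply, ← Finset.sum_sub_distrib, Finset.mul_sum, map_sum]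
  refine Finset.sum_congr rfl fun i _ => ?_
  rw [mul_sub, map_sub, mul_left_comm, gaussianExpectation_X_mul, pderiv_mul, map_add,
    add_sub_cancel_right]

lemma sum_gaussianExpectation_pderiv_sq_nonneg (u : MvPolynomial ι ℝ) :
    0 ≤ ∑ i, gaussianExpectation (pderiv i u * pderiv i u) :=
  Finset.sum_nonneg fun _ _ => gaussianExpectation_mul_self_nonneg _

lemma gaussianExpectation_numberOperator_sq (u : MvPolynomial ι ℝ) :
    gaussianExpectation (numberOperator u * numberOperator u) =
      ∑ i, (∑ j, gaussianExpectation (pderiv j (pderiv i u) * pderiv j (pderiv i u)) +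
        gaussianExpectation (pderiv i u * pderiv i u)) := by
  rw [gaussianExpectation_mul_numberOperator]
  refine Finset.sum_congr rfl fun i _ => ?_
  rw [pderiv_numberOperator, add_mul, map_add, mul_comm, gaussianExpectation_mul_numberOperator]

lemma sum_gaussianExpectation_pderiv_sq_le_and (e : ℕ) {u : MvPolynomial ι ℝ}
    (hu : u.IsHomogeneous e) :
    ∑ i, gaussianExpectation (pderiv i u * pderiv i u) ≤ e * gaussianExpectation (u * u) ∧
    gaussianExpectation (numberOperator u * numberOperator u) ≤
      e * ∑ i, gaussianExpectation (pderiv i u * pderiv i u) := by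
  induction e generalizing u with
  | zero =>
    simp [gaussianExpectation_mul_numberOperator, pderiv_eq_zero_of_isHomogeneous_zero hu]
  | succ e ih =>
    have energy := gaussianExpectation_mul_numberOperator u u
    have hnum : gaussianExpectation (numberOperator u * numberOperator u) ≤
        (e + 1 : ℕ) * ∑ i, gaussianExpectation (pderiv i u * pderiv i u) := by
      rw [gaussianExpectation_numberOperator_sq, Finset.mul_sum]
      refine Finset.sum_le_sum fun i _ => ?_
      push_cast
      linarith [(ih (u := pderiv i u) hu.pderiv).1]
    refine ⟨?_, hnum⟩
    rcases (sum_gaussianExpectation_pderiv_sq_nonneg u).eq_or_lt with h | h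
    · rw [← h]
      exact mul_nonneg (Nat.cast_nonneg _) (gaussianExpectation_mul_self_nonneg _)
    · have hcs := apply_mul_sq_le gaussianExpectation_mul_self_nonneg u (numberOperator u)
      rw [energy] at hcs
      have := mul_le_mul_of_nonneg_left hnum (gaussianExpectation_mul_self_nonneg u)
      exact le_of_mul_le_mul_right (by nlinarith) h

lemma sum_gaussianExpectation_pderiv_sq_le {e : ℕ} {u : MvPolynomial ι ℝ}
    (hu : u.IsHomogeneous e) :
    ∑ i, gaussianExpectation (pderiv i u * pderiv i u) ≤ e * gaussianExpectation (u * u) :=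
  (sum_gaussianExpectation_pderiv_sq_le_and e hu).1

lemma gaussianExpectation_laplacian_sq_le {e : ℕ} {u : MvPolynomial ι ℝ}
    (hu : u.IsHomogeneous e) :
    gaussianExpectation (laplacian Finset.univ u * laplacian Finset.univ u) ≤
      e ^ 2 * gaussianExpectation (u * u) := by
  have hnum := (sum_gaussianExpectation_pderiv_sq_le_and e hu).2
  have energy := gaussianExpectation_mul_numberOperator u u
  have hexpand : laplacian Finset.univ u * laplacian Finset.univ u =
      numberOperator u * numberOperator u + ((e : ℝ) ^ 2) • (u * u) -
        (2 * (e : ℝ)) • (u * numberOperator u) := by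
    simp only [numberOperator_of_isHomogeneous hu, smul_eq_C_mul, map_mul, map_pow, map_ofNat]
    ring
  rw [hexpand, map_sub, map_add, map_smul, map_smul, energy, smul_eq_mul, smul_eq_mul]
  nlinarith [mul_nonneg (Nat.cast_nonneg e : (0 : ℝ) ≤ e)
    (sum_gaussianExpectation_pderiv_sq_nonneg u)]

lemma natCast_mul_gaussianExpectation_pow_four {e : ℕ} {u : MvPolynomial ι ℝ}
    (hu : u.IsHomogeneous e) :
    e * gaussianExpectation (u * u * (u * u)) =
      gaussianExpectation (u * u * (u * laplacian Finset.univ u)) +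
        3 * ∑ i, gaussianExpectation (u * u * (pderiv i u * pderiv i u)) := by
  have h := gaussianExpectation_mul_numberOperator (u * u * u) u
  have hterm : ∀ i, pderiv i (u * u * u) * pderiv i u =
      (3 : ℝ) • (u * u * (pderiv i u * pderiv i u)) := fun i => by
    simp only [pderiv_mul, smul_eq_C_mul, map_ofNat]; ring
  have hleft : u * u * u * numberOperator u =
      (e : ℝ) • (u * u * (u * u)) - u * u * (u * laplacian Finset.univ u) := by
    simp only [numberOperator_of_isHomogeneous hu, smul_eq_C_mul]; ring
  simp_rw [hterm, hleft, map_sub, map_smul, smul_eq_mul, ← Finset.mul_sum] at h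
  linarith

lemma sum_gaussianExpectation_sq_mul_pderiv_sq_le {e : ℕ} {u : MvPolynomial ι ℝ}
    (hu : u.IsHomogeneous e) {c : ℝ} (hc : 0 ≤ c)
    (hgrad : ∀ i, √(gaussianExpectation (pderiv i u * pderiv i u * (pderiv i u * pderiv i u))) ≤
      c * gaussianExpectation (pderiv i u * pderiv i u)) :
    ∑ i, gaussianExpectation (u * u * (pderiv i u * pderiv i u)) ≤
      √(gaussianExpectation (u * u * (u * u))) * (c * (e * gaussianExpectation (u * u))) :=
  calc ∑ i, gaussianExpectation (u * u * (pderiv i u * pderiv i u))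
      ≤ ∑ i, √(gaussianExpectation (u * u * (u * u))) *
          (c * gaussianExpectation (pderiv i u * pderiv i u)) :=
        Finset.sum_le_sum fun i _ =>
          (apply_mul_le_sqrt_mul_sqrt gaussianExpectation_mul_self_nonneg _ _).trans
            (mul_le_mul_of_nonneg_left (hgrad i) (Real.sqrt_nonneg _))
    _ = √(gaussianExpectation (u * u * (u * u))) *
          (c * ∑ i, gaussianExpectation (pderiv i u * pderiv i u)) := by
        simp_rw [Finset.mul_sum]
    _ ≤ _ := by gcongr; exact sum_gaussianExpectation_pderiv_sq_le hu

lemma gaussianExpectation_sq_mul_laplacian_sq_le {e : ℕ} {u : MvPolynomial ι ℝ}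
    (hu : u.IsHomogeneous e) {c : ℝ} (hc : 0 ≤ c)
    (hlap : √(gaussianExpectation (laplacian Finset.univ u * laplacian Finset.univ u *
        (laplacian Finset.univ u * laplacian Finset.univ u))) ≤
      c * gaussianExpectation (laplacian Finset.univ u * laplacian Finset.univ u)) :
    gaussianExpectation (u * laplacian Finset.univ u * (u * laplacian Finset.univ u)) ≤
      √(gaussianExpectation (u * u * (u * u))) * (c * (e ^ 2 * gaussianExpectation (u * u))) := by
  rw [mul_mul_mul_comm]
  refine (apply_mul_le_sqrt_mul_sqrt gaussianExpectation_mul_self_nonneg _ _).trans ?_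
  gcongr
  exact hlap.trans (by gcongr; exact gaussianExpectation_laplacian_sq_le hu)

-- The three hypotheses are the moment recursion, where `s ^ 2` is the fourth moment and `w` is
-- `4 ^ e` times the second moment.
lemma le_of_moment_recursion {e s p w : ℝ} (he : 0 < e) (hw : 0 ≤ w)
    (hrec : e * s ^ 2 ≤ s * p + 3 * (s * (e * w / 4))) (hp : p ^ 2 ≤ s * (e ^ 2 * w / 16)) :
    s ≤ w := by
  by_contra! hlt
  have hs : 0 < s := hw.trans_lt hlt
  have hps : p < s * e / 4 := by
    refine lt_of_pow_lt_pow_left₀ 2 (by positivity) ?_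
    calc p ^ 2 ≤ s * (e ^ 2 * w / 16) := hp
      _ < s * (e ^ 2 * s / 16) := by gcongr
      _ = (s * e / 4) ^ 2 := by ring
  have h₁ : s * p < s * (s * e / 4) := by gcongr
  have h₂ : s * (e * w / 4) < s * (e * s / 4) := by gcongr
  linarith

lemma sqrt_gaussianExpectation_pow_four_le {e : ℕ} {u : MvPolynomial ι ℝ}
    (hu : u.IsHomogeneous e) :
    √(gaussianExpectation (u * u * (u * u))) ≤ 4 ^ e * gaussianExpectation (u * u) := by
  induction e using Nat.strong_induction_on generalizing u with
  | _ e ih =>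
  rcases Nat.eq_zero_or_pos e with rfl | he
  · obtain ⟨c, rfl⟩ := exists_eq_C_of_isHomogeneous_zero hu
    simp only [← map_mul, gaussianExpectation_C, pow_zero, one_mul]
    rw [Real.sqrt_mul_self (mul_self_nonneg c)]
  have hfour : (4 : ℝ) ^ e = 4 * 4 ^ (e - 1) := by rw [← pow_succ', Nat.sub_add_cancel he]
  have hgrad := sum_gaussianExpectation_sq_mul_pderiv_sq_le hu (by positivity)
    fun i => ih (e - 1) (by omega) hu.pderiv
  have hlap := gaussianExpectation_sq_mul_laplacian_sq_le hu (c := 4 ^ e / 16) (by positivity) <| by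
    rcases Nat.lt_or_ge e 2 with h2 | h2
    · simp [laplacian_eq_zero_of_isHomogeneous hu h2]
    · have hpow : (4 : ℝ) ^ e = 16 * 4 ^ (e - 2) := by
        rw [← Nat.sub_add_cancel h2, pow_add, Nat.add_sub_cancel]; ring
      rw [hpow, mul_div_cancel_left₀ _ (by norm_num)]
      exact ih (e - 2) (by omega) (isHomogeneous_laplacian hu _)
  have hcs := apply_mul_le_sqrt_mul_sqrt gaussianExpectation_mul_self_nonneg (u * u)
    (u * laplacian Finset.univ u)
  have hid := natCast_mul_gaussianExpectation_pow_four hu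
  refine le_of_moment_recursion (Nat.cast_pos.mpr he)
    (mul_nonneg (by positivity) (gaussianExpectation_mul_self_nonneg u))
    (p := √(gaussianExpectation (u * laplacian Finset.univ u * (u * laplacian Finset.univ u))))
    ?_ ?_
  · rw [Real.sq_sqrt (gaussianExpectation_mul_self_nonneg _), hid, hfour]
    linarith
  · rw [Real.sq_sqrt (gaussianExpectation_mul_self_nonneg _)]
    exact hlap.trans_eq (by ring)

end Gaussian

/-! ### The apolar form -/

section Apolar

variable {ι : Type*}

/-- The apolar inner product `∑ α, α! f_α g_α`, as a bilinear form. -/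
def apolarForm : MvPolynomial ι ℝ →ₗ[ℝ] MvPolynomial ι ℝ →ₗ[ℝ] ℝ :=
  (basisMonomials ι ℝ).constr ℝ fun α => (α.prod fun _ k => (k.factorial : ℝ)) • lcoeff ℝ α

lemma apolarForm_monomial (α : ι →₀ ℕ) (a : ℝ) (g : MvPolynomial ι ℝ) :
    apolarForm (monomial α a) g = a * ((α.prod fun _ k => (k.factorial : ℝ)) * coeff α g) := by
  have hbasis : apolarForm (monomial α (1 : ℝ)) =
      (α.prod fun _ k => (k.factorial : ℝ)) • lcoeff ℝ α := by
    have := (basisMonomials ι ℝ).constr_basis ℝ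
      (fun α => (α.prod fun _ k => (k.factorial : ℝ)) • lcoeff ℝ α) α
    simpa only [apolarForm, coe_basisMonomials] using this
  have ha : monomial α a = a • monomial α (1 : ℝ) := by simp [smul_monomial]
  rw [ha, map_smul, hbasis]
  simp [lcoeff]

lemma prod_factorial_add_single (i : ι) (α : ι →₀ ℕ) :
    ((α + Finsupp.single i 1).prod fun _ k => (k.factorial : ℝ)) =
      (α i + 1) * α.prod fun _ k => (k.factorial : ℝ) := by
  have herase : (α + Finsupp.single i 1).erase i = α.erase i := by
    classical
    ext j
    rcases eq_or_ne j i with rfl | h <;> simp [*]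
  rw [← Finsupp.mul_prod_erase' (α + Finsupp.single i 1) i _ (by simp),
    ← Finsupp.mul_prod_erase' α i _ (by simp), herase]
  simp [Nat.factorial_succ, mul_assoc]

lemma apolarForm_X_mul (i : ι) (f g : MvPolynomial ι ℝ) :
    apolarForm (X i * f) g = apolarForm f (pderiv i g) := by
  induction f using MvPolynomial.induction_on' with
  | monomial s a =>
    rw [X_mul_monomial, apolarForm_monomial, apolarForm_monomial, coeff_pderiv,
      prod_factorial_add_single]
    ring
  | add p q hp hq => simp only [mul_add, map_add, LinearMap.add_apply, hp, hq]

lemma apolarForm_sum_X_sq_mul (s : Finset ι) (f g : MvPolynomial ι ℝ) :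
    apolarForm ((∑ i ∈ s, X i ^ 2) * f) g = apolarForm f (laplacian s g) := by
  rw [laplacian_apply, Finset.sum_mul, map_sum, LinearMap.sum_apply, map_sum]
  exact Finset.sum_congr rfl fun i _ => by rw [sq, mul_assoc, apolarForm_X_mul, apolarForm_X_mul]

lemma apolarForm_C_C (a b : ℝ) : apolarForm (C a : MvPolynomial ι ℝ) (C b) = a * b := by
  rw [C_apply, apolarForm_monomial]
  simp

lemma apolarForm_self (f : MvPolynomial ι ℝ) :
    apolarForm f f =
      ∑ α ∈ f.support, (α.prod fun _ k => (k.factorial : ℝ)) * coeff α f ^ 2 := by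
  conv_lhs => enter [1]; rw [f.as_sum]
  rw [map_sum, LinearMap.sum_apply]
  exact Finset.sum_congr rfl fun α _ => by rw [apolarForm_monomial]; ring

lemma prod_factorial_pos (α : ι →₀ ℕ) : 0 < α.prod fun _ k => (k.factorial : ℝ) :=
  Finset.prod_pos fun _ _ => Nat.cast_pos.mpr (Nat.factorial_pos _)

lemma apolarForm_self_nonneg (f : MvPolynomial ι ℝ) : 0 ≤ apolarForm f f := by
  rw [apolarForm_self]
  exact Finset.sum_nonneg fun α _ => mul_nonneg (prod_factorial_pos α).le (sq_nonneg _)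

lemma apolarForm_self_pos {f : MvPolynomial ι ℝ} (hf : f ≠ 0) : 0 < apolarForm f f := by
  rw [apolarForm_self]
  refine Finset.sum_pos (fun α hα => mul_pos (prod_factorial_pos α) ?_) (by simpa using hf)
  exact sq_pos_of_ne_zero (mem_support_iff.mp hα)

lemma apolarForm_comm (f g : MvPolynomial ι ℝ) : apolarForm f g = apolarForm g f := by
  classical
  induction f using MvPolynomial.induction_on' with
  | add p q hp hq => simp only [map_add, LinearMap.add_apply, hp, hq]
  | monomial s a =>
    induction g using MvPolynomial.induction_on' with
    | add p q hp hq => simp only [map_add, LinearMap.add_apply, hp, hq]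
    | monomial t b =>
      rw [apolarForm_monomial, apolarForm_monomial, coeff_monomial, coeff_monomial]
      rcases eq_or_ne s t with rfl | h
      · simp only [if_true]; ring
      · simp [h, h.symm]

lemma apolarForm_sq_le (f g : MvPolynomial ι ℝ) :
    apolarForm f g ^ 2 ≤ apolarForm f f * apolarForm g g := by
  have := LinearMap.BilinForm.apply_mul_apply_le_of_forall_zero_le
    (B := apolarForm) apolarForm_self_nonneg f g
  rwa [apolarForm_comm g f, ← sq] at this

lemma apolarForm_add_self_le (f g : MvPolynomial ι ℝ) :
    apolarForm (f + g) (f + g) ≤ 2 * apolarForm f f + 2 * apolarForm g g := by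
  have := apolarForm_self_nonneg (f - g)
  simp only [map_add, map_sub, LinearMap.add_apply, LinearMap.sub_apply] at *
  linarith

variable [Fintype ι]

lemma natCast_mul_apolarForm {e : ℕ} {f : MvPolynomial ι ℝ} (hf : f.IsHomogeneous e)
    (g : MvPolynomial ι ℝ) :
    e * apolarForm f g = ∑ i, apolarForm (pderiv i f) (pderiv i g) := by
  rw [← smul_eq_mul, ← LinearMap.smul_apply, ← map_smul, smul_eq_sum_X_mul_pderiv hf, map_sum,
    LinearMap.sum_apply]
  simp_rw [apolarForm_X_mul]

lemma apolarForm_self_le_gaussianExpectation {e : ℕ} {f : MvPolynomial ι ℝ}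
    (hf : f.IsHomogeneous e) : apolarForm f f ≤ gaussianExpectation (f * f) := by
  induction e generalizing f with
  | zero =>
    obtain ⟨c, rfl⟩ := exists_eq_C_of_isHomogeneous_zero hf
    rw [apolarForm_C_C, ← map_mul, gaussianExpectation_C]
  | succ e ih =>
    refine le_of_mul_le_mul_left ?_ (by positivity : (0 : ℝ) < (e + 1 : ℕ))
    calc _ = ∑ i, apolarForm (pderiv i f) (pderiv i f) := natCast_mul_apolarForm hf f
      _ ≤ ∑ i, gaussianExpectation (pderiv i f * pderiv i f) :=
        Finset.sum_le_sum fun i _ => ih hf.pderiv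
      _ ≤ _ := sum_gaussianExpectation_pderiv_sq_le hf

end Apolar

lemma apolarForm_mul_self_le {ι : Type*} [Finite ι] {a b : ℕ} {f g : MvPolynomial ι ℝ}
    (hf : f.IsHomogeneous a) (hg : g.IsHomogeneous b) :
    apolarForm (f * g) (f * g) ≤ 2 ^ (a + b) * (apolarForm f f * apolarForm g g) := by
  have := Fintype.ofFinite ι
  induction hN : a + b generalizing a b f g with
  | zero =>
    obtain ⟨rfl, rfl⟩ : a = 0 ∧ b = 0 := by omega
    obtain ⟨c, rfl⟩ := exists_eq_C_of_isHomogeneous_zero hf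
    obtain ⟨d, rfl⟩ := exists_eq_C_of_isHomogeneous_zero hg
    simp only [← map_mul, apolarForm_C_C, pow_zero, one_mul]
    exact (mul_mul_mul_comm c d c d).le
  | succ N ih =>
    have hleft : ∀ i, apolarForm (pderiv i f * g) (pderiv i f * g) ≤
        2 ^ N * (apolarForm (pderiv i f) (pderiv i f) * apolarForm g g) := fun i => by
      rcases Nat.eq_zero_or_pos a with rfl | ha
      · simp [pderiv_eq_zero_of_isHomogeneous_zero hf]
      · exact ih hf.pderiv hg (by omega)
    have hright : ∀ i, apolarForm (f * pderiv i g) (f * pderiv i g) ≤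
        2 ^ N * (apolarForm f f * apolarForm (pderiv i g) (pderiv i g)) := fun i => by
      rcases Nat.eq_zero_or_pos b with rfl | hb
      · simp [pderiv_eq_zero_of_isHomogeneous_zero hg]
      · exact ih hf hg.pderiv (by omega)
    refine le_of_mul_le_mul_left ?_ (by positivity : (0 : ℝ) < (N + 1 : ℕ))
    calc ((N + 1 : ℕ) : ℝ) * apolarForm (f * g) (f * g)
        = ∑ i, apolarForm (pderiv i f * g + f * pderiv i g)
            (pderiv i f * g + f * pderiv i g) := by
          rw [← hN, natCast_mul_apolarForm (hf.mul hg)]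
          simp_rw [pderiv_mul]
      _ ≤ ∑ i, (2 ^ (N + 1) * (apolarForm (pderiv i f) (pderiv i f) * apolarForm g g) +
            2 ^ (N + 1) * (apolarForm f f * apolarForm (pderiv i g) (pderiv i g))) :=
          Finset.sum_le_sum fun i _ => (apolarForm_add_self_le _ _).trans
            (by rw [pow_succ]; linarith [hleft i, hright i])
      _ = 2 ^ (N + 1) * ((a * apolarForm f f) * apolarForm g g +
            apolarForm f f * (b * apolarForm g g)) := by
          rw [natCast_mul_apolarForm hf, natCast_mul_apolarForm hg, Finset.sum_add_distrib,
            ← Finset.mul_sum, ← Finset.mul_sum, ← Finset.sum_mul, ← Finset.mul_sum, mul_add]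
      _ = (N + 1 : ℕ) * (2 ^ (N + 1) * (apolarForm f f * apolarForm g g)) := by
          rw [← hN]; push_cast; ring

section Euler

variable {ι : Type*} {s : Finset ι} {d : ℝ} {f : MvPolynomial ι ℝ}

/-- `f` satisfies Euler's identity of degree `d` in the variables belonging to `s`; this is how
homogeneity of degree `d` in these variables is used. -/
def IsEulerHomogeneous (s : Finset ι) (d : ℝ) (f : MvPolynomial ι ℝ) : Prop :=
  ∑ i ∈ s, X i * pderiv i f = d • f

lemma IsEulerHomogeneous.pderiv (hf : IsEulerHomogeneous s d f) {i : ι} (hi : i ∈ s) :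
    IsEulerHomogeneous s (d - 1) (pderiv i f) := by
  classical
  have h := congrArg (MvPolynomial.pderiv i) hf
  simp only [map_sum, pderiv_mul, pderiv_X, Derivation.map_smul, Finset.sum_add_distrib,
    Pi.single_apply, ite_mul, one_mul, zero_mul, Finset.sum_ite_eq', hi, if_true] at h
  rw [IsEulerHomogeneous, sub_smul, one_smul, ← h, add_sub_cancel_left]
  simp_rw [pderiv_comm i]

lemma IsEulerHomogeneous.smul_apply (hf : IsEulerHomogeneous s d f)
    (L : MvPolynomial ι ℝ →ₗ[ℝ] ℝ) : d * L f = ∑ i ∈ s, L (X i * MvPolynomial.pderiv i f) := by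
  rw [← map_sum, hf, map_smul, smul_eq_mul]

lemma IsEulerHomogeneous.gaussianExpectation_laplacian [Fintype ι]
    (hf : IsEulerHomogeneous s d f) :
    gaussianExpectation (laplacian s f) = d * gaussianExpectation f := by
  rw [hf.smul_apply, laplacian_apply, map_sum]
  simp_rw [gaussianExpectation_X_mul]

lemma isWeightedHomogeneous_map {M N : Type*} [AddCommMonoid M] [AddCommMonoid N] {w : ι → M}
    {k : M} (hf : f.IsWeightedHomogeneous w k) (φ : M →+ N) :
    f.IsWeightedHomogeneous (φ ∘ w) (φ k) := by
  intro α hα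
  rw [← hf hα, Finsupp.weight_apply, Finsupp.weight_apply, map_finsuppSum]
  simp_rw [Function.comp_apply, map_nsmul]

end Euler

/-! ### Sums of squares and the apolar form -/

section SumOfSquares

lemma exists_sum_smul_mul_eq_sum_sq {κ A : Type*} [Fintype κ] [CommRing A] [Algebra ℝ A]
    {M : Matrix κ κ ℝ} (hM : M.PosSemidef) (p : κ → A) :
    ∃ (N : ℕ) (v : Fin N → κ → ℝ),
      ∑ i, ∑ j, M i j • (p i * p j) = ∑ r, (∑ i, v r i • p i) ^ 2 := by
  obtain ⟨N, v, rfl⟩ := Matrix.posSemidef_iff_eq_sum_vecMulVec.mp hM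
  refine ⟨N, v, ?_⟩
  simp_rw [sq, Finset.sum_mul_sum, smul_mul_smul_comm, Matrix.sum_apply, Matrix.vecMulVec_apply,
    Finset.sum_smul, Pi.star_apply, star_trivial]
  simp_rw [Finset.sum_comm (s := Finset.univ (α := κ)) (t := Finset.univ (α := Fin N))]

variable {ι κ M : Type*} [Fintype κ]

lemma posSemidef_apolarForm_mul {p : κ → MvPolynomial ι ℝ} {F : MvPolynomial ι ℝ}
    (hF : ∀ v : κ → ℝ, 0 ≤ apolarForm ((∑ i, v i • p i) * ∑ i, v i • p i) F) :
    (Matrix.of fun i j => apolarForm (p i * p j) F).PosSemidef := by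
  refine Matrix.PosSemidef.of_dotProduct_mulVec_nonneg (by ext; simp [mul_comm]) fun v => ?_
  have h := hF v
  simp only [Finset.sum_mul_sum, map_sum, LinearMap.sum_apply, smul_mul_smul_comm, map_smul,
    LinearMap.smul_apply, smul_eq_mul] at h
  simp only [dotProduct, Matrix.mulVec, Matrix.of_apply, Finset.mul_sum]
  refine h.trans_eq (Finset.sum_congr rfl fun i _ => Finset.sum_congr rfl fun j _ => ?_)
  rw [Pi.star_apply, star_trivial]
  ring

variable [AddCancelCommMonoid M] {w : ι → M} {d : M}

/-- A family `p` of forms of weighted degree `d`, with operators `T k` adjoint to multiplication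
by `p k` for the apolar form, such that `∑ p k * T k f` is a positive multiple of `f` for every
form `f` of weighted degree at least `d`. -/
structure IsApolarFrame (w : ι → M) (d : M) (p : κ → MvPolynomial ι ℝ)
    (T : κ → MvPolynomial ι ℝ →ₗ[ℝ] MvPolynomial ι ℝ) : Prop where
  isWeightedHomogeneous : ∀ k, (p k).IsWeightedHomogeneous w d
  adjoint : ∀ k f g, apolarForm (p k * f) g = apolarForm f (T k g)
  map_degree : ∀ k d' f, f.IsWeightedHomogeneous w (d + d') → (T k f).IsWeightedHomogeneous w d'
  resolution : ∀ d', ∃ c : ℝ, 0 < c ∧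
    ∀ f : MvPolynomial ι ℝ, f.IsWeightedHomogeneous w (d + d') → ∑ k, p k * T k f = c • f

lemma isApolarFrame_one (w : ι → M) :
    IsApolarFrame w 0 (fun _ : Unit => 1) fun _ => LinearMap.id where
  isWeightedHomogeneous _ := isWeightedHomogeneous_one ℝ w
  adjoint := by simp
  map_degree := by simp
  resolution _ := ⟨1, one_pos, by simp⟩

lemma IsApolarFrame.X_mul {p : κ → MvPolynomial ι ℝ}
    {T : κ → MvPolynomial ι ℝ →ₗ[ℝ] MvPolynomial ι ℝ} (h : IsApolarFrame w d p T)
    {s : Finset ι} {e : M} (hs : ∀ i ∈ s, w i = e)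
    (heuler : ∀ d', ∃ c : ℝ, 0 < c ∧ ∀ f : MvPolynomial ι ℝ,
      f.IsWeightedHomogeneous w (d + e + d') → IsEulerHomogeneous s c f) :
    IsApolarFrame w (d + e) (fun r : s × κ => X (r.1 : ι) * p r.2)
      (fun r : s × κ => T r.2 ∘ₗ (pderiv (r.1 : ι)).toLinearMap) := by
  have hpderiv : ∀ (i : s) (d' : M) (f : MvPolynomial ι ℝ),
      f.IsWeightedHomogeneous w (d + e + d') →
        (pderiv (i : ι) f).IsWeightedHomogeneous w (d + d') := fun i d' f hf =>
    hf.pderiv (by rw [hs i i.2, add_right_comm])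
  refine ⟨fun r => ?_, fun r f g => ?_, fun r d' f hf => h.map_degree _ _ _ (hpderiv _ _ _ hf),
    fun d' => ?_⟩
  · rw [add_comm, ← hs r.1 r.1.2]
    exact (isWeightedHomogeneous_X ℝ w _).mul (h.isWeightedHomogeneous r.2)
  · rw [mul_assoc, apolarForm_X_mul, h.adjoint]
    rfl
  · obtain ⟨c, hc, hres⟩ := h.resolution d'
    obtain ⟨c', hc', hdeg⟩ := heuler d'
    refine ⟨c * c', mul_pos hc hc', fun f hf => ?_⟩
    rw [Fintype.sum_prod_type, mul_smul, ← hdeg f hf, Finset.smul_sum, ← Finset.sum_coe_sort s]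
    refine Finset.sum_congr rfl fun i _ => ?_
    rw [← mul_smul_comm, ← hres _ (hpderiv i d' f hf), Finset.mul_sum]
    exact Finset.sum_congr rfl fun k _ => mul_assoc _ _ _

lemma IsApolarFrame.exists_smul_eq_sum {p : κ → MvPolynomial ι ℝ}
    {T : κ → MvPolynomial ι ℝ →ₗ[ℝ] MvPolynomial ι ℝ} (h : IsApolarFrame w d p T)
    (hw : ∀ f : MvPolynomial ι ℝ, f.IsWeightedHomogeneous w 0 → f.IsHomogeneous 0) :
    ∃ c : ℝ, 0 < c ∧ ∀ F : MvPolynomial ι ℝ, F.IsWeightedHomogeneous w (d + d) →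
      c • F = ∑ i, ∑ j, apolarForm (p i * p j) F • (p i * p j) := by
  obtain ⟨c, hc, hres⟩ := h.resolution d
  obtain ⟨c', hc', hres'⟩ := h.resolution 0
  refine ⟨c' * c, mul_pos hc' hc, fun F hF => ?_⟩
  have hT : ∀ i, (T i F).IsWeightedHomogeneous w d := fun i => h.map_degree i d F hF
  have hTT : ∀ i j, T j (T i F) = C (apolarForm (p i * p j) F) := fun i j => by
    obtain ⟨r, hr⟩ := exists_eq_C_of_isHomogeneous_zero
      (hw _ (h.map_degree j 0 _ (by simpa using hT i)))
    rw [h.adjoint, ← mul_one (p j), h.adjoint, hr, ← C_1, apolarForm_C_C, one_mul]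
  rw [mul_smul, ← hres F hF, Finset.smul_sum]
  refine Finset.sum_congr rfl fun i _ => ?_
  rw [← mul_smul_comm, ← hres' (T i F) (by simpa using hT i), Finset.mul_sum]
  refine Finset.sum_congr rfl fun j _ => ?_
  rw [hTT, smul_eq_C_mul]
  ring

lemma IsApolarFrame.exists_eq_sum_sq {p : κ → MvPolynomial ι ℝ}
    {T : κ → MvPolynomial ι ℝ →ₗ[ℝ] MvPolynomial ι ℝ} (h : IsApolarFrame w d p T)
    (hw : ∀ f : MvPolynomial ι ℝ, f.IsWeightedHomogeneous w 0 → f.IsHomogeneous 0)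
    {F : MvPolynomial ι ℝ} (hF : F.IsWeightedHomogeneous w (d + d))
    (hpos : ∀ g : MvPolynomial ι ℝ, g.IsWeightedHomogeneous w d → 0 ≤ apolarForm (g * g) F) :
    ∃ (N : ℕ) (g : Fin N → MvPolynomial ι ℝ),
      (∀ r, (g r).IsWeightedHomogeneous w d) ∧ F = ∑ r, g r ^ 2 := by
  obtain ⟨c, hc, hexpand⟩ := h.exists_smul_eq_sum hw
  have hspan : ∀ v : κ → ℝ, (∑ i, v i • p i).IsWeightedHomogeneous w d := fun v =>
    (weightedHomogeneousSubmodule ℝ w d).sum_mem fun i _ =>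
      (weightedHomogeneousSubmodule ℝ w d).smul_mem _ (h.isWeightedHomogeneous i)
  obtain ⟨N, v, hv⟩ := exists_sum_smul_mul_eq_sum_sq
    (posSemidef_apolarForm_mul fun v => hpos _ (hspan v)) p
  refine ⟨N, fun r => √c⁻¹ • ∑ i, v r i • p i,
    fun r => (weightedHomogeneousSubmodule ℝ w d).smul_mem _ (hspan (v r)), ?_⟩
  simp only [Matrix.of_apply] at hv
  simp_rw [smul_pow, ← Finset.smul_sum, ← hv, ← hexpand F hF]
  rw [Real.sq_sqrt (inv_nonneg.mpr hc.le), inv_smul_smul₀ hc.ne']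

end SumOfSquares

/-! ### Biforms -/

section WeightedLaplacian

lemma isWeightedHomogeneous_laplacian {ι M : Type*} [AddCancelCommMonoid M] {w : ι → M} {d e : M}
    {s : Finset ι} (hs : ∀ i ∈ s, w i = e) {f : MvPolynomial ι ℝ}
    (hf : f.IsWeightedHomogeneous w (d + e + e)) : (laplacian s f).IsWeightedHomogeneous w d := by
  rw [laplacian_apply]
  refine (weightedHomogeneousSubmodule ℝ w d).sum_mem fun i hi => ?_
  exact (hf.pderiv (n' := d + e) (by rw [hs i hi])).pderiv (by rw [hs i hi])

end WeightedLaplacian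

section Biforms

variable {n m : ℕ}

/-- The variables `x₁, …, xₙ`. -/
def xVars (n m : ℕ) : Finset (Fin n ⊕ Fin m) := Finset.univ.map Function.Embedding.inl

/-- The variables `y₁, …, y_m`. -/
def yVars (n m : ℕ) : Finset (Fin n ⊕ Fin m) := Finset.univ.map Function.Embedding.inr

lemma card_xVars : (xVars n m).card = n := by simp [xVars]

lemma card_yVars : (yVars n m).card = m := by simp [yVars]

lemma bw_of_mem_xVars : ∀ i ∈ xVars n m, bw n m i = (1, 0) := by simp [xVars, bw]

lemma bw_of_mem_yVars : ∀ i ∈ yVars n m, bw n m i = (0, 1) := by simp [yVars, bw]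

lemma qpoly_eq (a b : ℕ) : qpoly n m a b =
    (∑ i ∈ xVars n m, X i ^ 2) ^ a * (∑ i ∈ yVars n m, X i ^ 2) ^ b := by
  simp [qpoly, xVars, yVars]

lemma isHomogeneous_of_mem_biform {a b : ℕ} {f : MvPolynomial (Fin n ⊕ Fin m) ℝ}
    (hf : f ∈ Biform n m a b) : f.IsHomogeneous (a + b) := by
  have hw : (AddMonoidHom.id ℕ).coprod (AddMonoidHom.id ℕ) ∘ bw n m = 1 := by
    ext i
    rcases i with i | i <;> simp [bw]
  have h := isWeightedHomogeneous_map hf ((AddMonoidHom.id ℕ).coprod (AddMonoidHom.id ℕ))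
  rw [hw] at h
  exact h

lemma isEulerHomogeneous_xVars {d : ℕ × ℕ} {f : MvPolynomial (Fin n ⊕ Fin m) ℝ}
    (hf : f.IsWeightedHomogeneous (bw n m) d) : IsEulerHomogeneous (xVars n m) d.1 f := by
  have h := (isWeightedHomogeneous_map hf (AddMonoidHom.fst ℕ ℕ)).sum_weight_X_mul_pderiv
  rw [Fintype.sum_sum_type] at h
  simpa [bw, IsEulerHomogeneous, xVars, Nat.cast_smul_eq_nsmul] using h

lemma isEulerHomogeneous_yVars {d : ℕ × ℕ} {f : MvPolynomial (Fin n ⊕ Fin m) ℝ}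
    (hf : f.IsWeightedHomogeneous (bw n m) d) : IsEulerHomogeneous (yVars n m) d.2 f := by
  have h := (isWeightedHomogeneous_map hf (AddMonoidHom.snd ℕ ℕ)).sum_weight_X_mul_pderiv
  rw [Fintype.sum_sum_type] at h
  simpa [bw, IsEulerHomogeneous, yVars, Nat.cast_smul_eq_nsmul] using h

lemma mul_mem_biform {a b : ℕ} {f g : MvPolynomial (Fin n ⊕ Fin m) ℝ} (hf : f ∈ Biform n m a b)
    (hg : g ∈ Biform n m a b) : f * g ∈ Biform n m (2 * a) (2 * b) := by
  rw [two_mul, two_mul]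
  exact IsWeightedHomogeneous.mul hf hg

lemma qpoly_mem_biform (a b : ℕ) : qpoly n m a b ∈ Biform n m (2 * a) (2 * b) := by
  have hsum : ∀ {s : Finset (Fin n ⊕ Fin m)} {e : ℕ × ℕ}, (∀ i ∈ s, bw n m i = e) →
      (∑ i ∈ s, X i ^ 2 : MvPolynomial _ ℝ).IsWeightedHomogeneous (bw n m) (2 • e) := fun hs =>
    (weightedHomogeneousSubmodule ℝ _ _).sum_mem fun i hi =>
      hs i hi ▸ (isWeightedHomogeneous_X ℝ (bw n m) i).pow 2
  have h := ((hsum bw_of_mem_xVars).pow a).mul ((hsum bw_of_mem_yVars).pow b)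
  rw [← qpoly_eq] at h
  simpa [Biform, mul_comm] using h

lemma biform_laplacian_induction {P : ℕ → ℕ → MvPolynomial (Fin n ⊕ Fin m) ℝ → Prop}
    (const : ∀ c, P 0 0 (C c))
    (xstep : ∀ a b, ∀ f ∈ Biform n m (2 * (a + 1)) (2 * b),
      P a b (laplacian (xVars n m) f) → P (a + 1) b f)
    (ystep : ∀ b, ∀ f ∈ Biform n m (2 * 0) (2 * (b + 1)),
      P 0 b (laplacian (yVars n m) f) → P 0 (b + 1) f)
    {a b : ℕ} {f : MvPolynomial (Fin n ⊕ Fin m) ℝ} (hf : f ∈ Biform n m (2 * a) (2 * b)) :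
    P a b f := by
  induction a generalizing b f with
  | zero =>
    induction b generalizing f with
    | zero =>
      obtain ⟨c, rfl⟩ := exists_eq_C_of_isHomogeneous_zero (isHomogeneous_of_mem_biform hf)
      exact const c
    | succ b ih =>
      exact ystep b f hf (ih (isWeightedHomogeneous_laplacian bw_of_mem_yVars hf))
  | succ a ih =>
    exact xstep a b f hf (ih (isWeightedHomogeneous_laplacian bw_of_mem_xVars hf))

lemma exists_isApolarFrame_biform (n m a b : ℕ) : ∃ (κ : Type) (_ : Fintype κ)
    (p : κ → MvPolynomial (Fin n ⊕ Fin m) ℝ)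
    (T : κ → MvPolynomial (Fin n ⊕ Fin m) ℝ →ₗ[ℝ] MvPolynomial (Fin n ⊕ Fin m) ℝ),
    IsApolarFrame (bw n m) (a, b) p T := by
  induction a with
  | zero =>
    induction b with
    | zero => exact ⟨Unit, inferInstance, _, _, isApolarFrame_one _⟩
    | succ b ih =>
      obtain ⟨κ, _, p, T, h⟩ := ih
      refine ⟨yVars n m × κ, inferInstance, _, _, h.X_mul bw_of_mem_yVars fun d' => ?_⟩
      exact ⟨(b + 1 + d'.2 : ℕ), by positivity, fun f hf => isEulerHomogeneous_yVars hf⟩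
  | succ a ih =>
    obtain ⟨κ, _, p, T, h⟩ := ih
    refine ⟨xVars n m × κ, inferInstance, _, _, h.X_mul bw_of_mem_xVars fun d' => ?_⟩
    exact ⟨(a + 1 + d'.1 : ℕ), by positivity, fun f hf => isEulerHomogeneous_xVars hf⟩

lemma mem_sqSet_of_apolarForm_nonneg {a b : ℕ} {F : MvPolynomial (Fin n ⊕ Fin m) ℝ}
    (hF : F ∈ Biform n m (2 * a) (2 * b))
    (hpos : ∀ g ∈ Biform n m a b, 0 ≤ apolarForm (g * g) F) : F ∈ SqSet n m a b := by
  obtain ⟨κ, _, p, T, h⟩ := exists_isApolarFrame_biform n m a b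
  rw [two_mul, two_mul] at hF
  exact h.exists_eq_sum_sq (fun f hf => isHomogeneous_of_mem_biform (a := 0) (b := 0) hf) hF hpos

end Biforms

/-! ### Averages over a product of spheres -/

section SphereAverage

variable {ι : Type*} {s : Finset ι} {I : MvPolynomial ι ℝ →ₗ[ℝ] ℝ}

/-- The algebraic properties of averaging over the unit sphere in the variables belonging to `s`:
the sphere equation and the infinitesimal rotation invariance. -/
structure IsSphereAverage (s : Finset ι) (I : MvPolynomial ι ℝ →ₗ[ℝ] ℝ) : Prop where
  sum_X_sq_mul : ∀ f, I ((∑ i ∈ s, X i ^ 2) * f) = I f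
  X_mul_pderiv : ∀ i ∈ s, ∀ j ∈ s, ∀ f, I (X i * pderiv j f) = I (X j * pderiv i f)

lemma IsSphereAverage.sum_X_sq_pow_mul (hI : IsSphereAverage s I) (k : ℕ) (f : MvPolynomial ι ℝ) :
    I ((∑ i ∈ s, X i ^ 2) ^ k * f) = I f := by
  induction k with
  | zero => rw [pow_zero, one_mul]
  | succ k ih => rw [pow_succ', mul_assoc, hI.sum_X_sq_mul, ih]

lemma IsSphereAverage.apply_pderiv (hI : IsSphereAverage s I) {d : ℝ} {f : MvPolynomial ι ℝ}
    (hf : IsEulerHomogeneous s d f) {i : ι} (hi : i ∈ s) :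
    I (pderiv i f) = (s.card + d - 1) * I (X i * f) := by
  classical
  have hdiv : ∑ j ∈ s, X i * pderiv j (X j * f) = (s.card + d) • (X i * f) := by
    rw [← Finset.mul_sum, ← mul_smul_comm, add_smul, ← hf]
    simp [Finset.sum_add_distrib, Nat.cast_smul_eq_nsmul, add_comm]
  have hrot : ∑ j ∈ s, X j * pderiv i (X j * f) =
      X i * f + (∑ j ∈ s, X j ^ 2) * pderiv i f := by
    simp [mul_add, Finset.sum_add_distrib, Pi.single_apply, hi, Finset.sum_mul, sq, mul_assoc,
      add_comm]
  have heq : I (∑ j ∈ s, X i * pderiv j (X j * f)) = I (∑ j ∈ s, X j * pderiv i (X j * f)) := by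
    simp only [map_sum]
    exact Finset.sum_congr rfl fun j hj => hI.X_mul_pderiv i hi j hj _
  rw [hdiv, hrot, map_smul, smul_eq_mul, map_add, hI.sum_X_sq_mul] at heq
  linarith

lemma IsSphereAverage.apply_laplacian (hI : IsSphereAverage s I) {d : ℝ} {f : MvPolynomial ι ℝ}
    (hf : IsEulerHomogeneous s d f) :
    I (laplacian s f) = (s.card + d - 2) * (d * I f) := by
  rw [hf.smul_apply, laplacian_apply, map_sum, Finset.mul_sum]
  refine Finset.sum_congr rfl fun i hi => ?_
  rw [hI.apply_pderiv (hf.pderiv hi) hi]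
  ring

end SphereAverage

section GaussMoment

/-- The Gaussian moment `N (N + 2) ⋯ (N + 2 (k - 1))` of `|x| ^ (2 k)` in `ℝ ^ N`. -/
def gaussMoment (N k : ℕ) : ℝ := ∏ j ∈ Finset.range k, ((N : ℝ) + 2 * j)

lemma gaussMoment_zero (N : ℕ) : gaussMoment N 0 = 1 := Finset.prod_range_zero _

lemma gaussMoment_succ (N k : ℕ) : gaussMoment N (k + 1) = gaussMoment N k * (N + 2 * k) :=
  Finset.prod_range_succ _ _

lemma gaussMoment_pos {N : ℕ} (hN : 0 < N) (k : ℕ) : 0 < gaussMoment N k :=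
  Finset.prod_pos fun _ _ => by positivity

lemma gaussMoment_sq_le (N k : ℕ) : gaussMoment N k ^ 2 ≤ gaussMoment N (2 * k) := by
  rw [sq, two_mul, gaussMoment, gaussMoment, Finset.prod_range_add]
  refine mul_le_mul_of_nonneg_left (Finset.prod_le_prod (fun _ _ => by positivity) fun i _ => ?_)
    (Finset.prod_nonneg fun _ _ => by positivity)
  push_cast
  linarith [Nat.cast_nonneg (α := ℝ) k]

lemma gaussMoment_le (N k : ℕ) : gaussMoment N k ≤ ((N : ℝ) + 2 * k) ^ k := by
  rw [← Finset.card_range k, ← Finset.prod_const, Finset.card_range]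
  refine Finset.prod_le_prod (fun _ _ => by positivity) fun i hi => ?_
  have : (i : ℝ) ≤ k := by exact_mod_cast (Finset.mem_range.mp hi).le
  linarith

end GaussMoment

section BisphereAverage

variable {n m : ℕ} {I : MvPolynomial (Fin n ⊕ Fin m) ℝ →ₗ[ℝ] ℝ}

/-- The algebraic properties of averaging over `S^{n-1} × S^{m-1}`. -/
structure IsBisphereAverage (n m : ℕ) (I : MvPolynomial (Fin n ⊕ Fin m) ℝ →ₗ[ℝ] ℝ) : Prop where
  one : I 1 = 1
  mul_self_nonneg : ∀ f, 0 ≤ I (f * f)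
  xSphere : IsSphereAverage (xVars n m) I
  ySphere : IsSphereAverage (yVars n m) I

namespace IsBisphereAverage

variable {a b : ℕ} {f g h : MvPolynomial (Fin n ⊕ Fin m) ℝ}

lemma apply_C (hI : IsBisphereAverage n m I) (c : ℝ) : I (C c) = c := by
  rw [← mul_one (C c), ← smul_eq_C_mul, map_smul, hI.one, smul_eq_mul, mul_one]

lemma apply_laplacian_xVars (hI : IsBisphereAverage n m I) (hf : f ∈ Biform n m (2 * (a + 1)) b) :
    I (laplacian (xVars n m) f) = (n + 2 * a) * (2 * (a + 1) * I f) := by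
  rw [hI.xSphere.apply_laplacian (isEulerHomogeneous_xVars hf), card_xVars]
  push_cast
  ring

lemma apply_laplacian_yVars (hI : IsBisphereAverage n m I) (hf : f ∈ Biform n m a (2 * (b + 1))) :
    I (laplacian (yVars n m) f) = (m + 2 * b) * (2 * (b + 1) * I f) := by
  rw [hI.ySphere.apply_laplacian (isEulerHomogeneous_yVars hf), card_yVars]
  push_cast
  ring

lemma gaussianExpectation_eq (hI : IsBisphereAverage n m I)
    (hf : f ∈ Biform n m (2 * a) (2 * b)) :
    gaussianExpectation f = gaussMoment n a * gaussMoment m b * I f := by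
  refine biform_laplacian_induction
    (P := fun a b f => gaussianExpectation f = gaussMoment n a * gaussMoment m b * I f)
    (fun c => ?_) (fun a b f hf ih => ?_) (fun b f hf ih => ?_) hf
  · rw [gaussianExpectation_C, hI.apply_C, gaussMoment_zero, gaussMoment_zero, one_mul, one_mul]
  · rw [(isEulerHomogeneous_xVars hf).gaussianExpectation_laplacian,
      hI.apply_laplacian_xVars hf] at ih
    push_cast at ih
    refine mul_left_cancel₀ (by positivity : (2 * ((a : ℝ) + 1)) ≠ 0) ?_
    rw [ih, gaussMoment_succ]
    ring
  · rw [(isEulerHomogeneous_yVars hf).gaussianExpectation_laplacian,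
      hI.apply_laplacian_yVars hf] at ih
    push_cast at ih
    refine mul_left_cancel₀ (by positivity : (2 * ((b : ℝ) + 1)) ≠ 0) ?_
    rw [ih, gaussMoment_succ m]
    ring

lemma apolarForm_qpoly (hI : IsBisphereAverage n m I) (hf : f ∈ Biform n m (2 * a) (2 * b)) :
    apolarForm (qpoly n m a b) f = 2 ^ (a + b) * (a.factorial * b.factorial) *
      (gaussMoment n a * gaussMoment m b) * I f := by
  refine biform_laplacian_induction
    (P := fun a b f => apolarForm (qpoly n m a b) f = 2 ^ (a + b) * (a.factorial * b.factorial) *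
      (gaussMoment n a * gaussMoment m b) * I f)
    (fun c => ?_) (fun a b f hf ih => ?_) (fun b f hf ih => ?_) hf
  · rw [hI.apply_C, qpoly_eq, pow_zero, pow_zero, one_mul, ← C_1, apolarForm_C_C]
    simp [gaussMoment_zero]
  · rw [qpoly_eq, pow_succ', mul_assoc, apolarForm_sum_X_sq_mul, ← qpoly_eq, ih,
      hI.apply_laplacian_xVars hf, gaussMoment_succ, Nat.factorial_succ]
    push_cast
    ring
  · rw [qpoly_eq, pow_succ', mul_left_comm, apolarForm_sum_X_sq_mul, ← qpoly_eq, ih,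
      hI.apply_laplacian_yVars hf, gaussMoment_succ m, Nat.factorial_succ]
    push_cast
    ring

lemma apply_qpoly_mul (hI : IsBisphereAverage n m I) (a b : ℕ)
    (f : MvPolynomial (Fin n ⊕ Fin m) ℝ) : I (qpoly n m a b * f) = I f := by
  rw [qpoly_eq, mul_assoc, hI.xSphere.sum_X_sq_pow_mul, hI.ySphere.sum_X_sq_pow_mul]

lemma apolarForm_self_le (hI : IsBisphereAverage n m I) (hf : f ∈ Biform n m a b) :
    apolarForm f f ≤ gaussMoment n a * gaussMoment m b * I (f * f) := by
  rw [← hI.gaussianExpectation_eq (mul_mem_biform hf hf)]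
  exact apolarForm_self_le_gaussianExpectation (isHomogeneous_of_mem_biform hf)

lemma mul_self_pos (hI : IsBisphereAverage n m I) (hf : f ∈ Biform n m a b) (hf0 : f ≠ 0) :
    0 < I (f * f) := by
  refine (hI.mul_self_nonneg f).lt_of_ne fun h => (apolarForm_self_pos hf0).not_ge ?_
  simpa only [← h, mul_zero] using hI.apolarForm_self_le hf

lemma sqrt_pow_four_le (hI : IsBisphereAverage n m I) (hn : 0 < n) (hm : 0 < m)
    (hf : f ∈ Biform n m a b) : √(I (f * f * (f * f))) ≤ 4 ^ (a + b) * I (f * f) := by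
  have hff := mul_mem_biform hf hf
  have hfour := sqrt_gaussianExpectation_pow_four_le (isHomogeneous_of_mem_biform hf)
  rw [hI.gaussianExpectation_eq hff, hI.gaussianExpectation_eq (mul_mem_biform hff hff)] at hfour
  have hpos : 0 < gaussMoment n a * gaussMoment m b :=
    mul_pos (gaussMoment_pos hn a) (gaussMoment_pos hm b)
  have hmoment : gaussMoment n a * gaussMoment m b ≤
      √(gaussMoment n (2 * a) * gaussMoment m (2 * b)) := by
    refine Real.le_sqrt_of_sq_le ?_
    rw [mul_pow]
    exact mul_le_mul (gaussMoment_sq_le n a) (gaussMoment_sq_le m b) (sq_nonneg _)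
      (gaussMoment_pos hn _).le
  refine le_of_mul_le_mul_left ?_ hpos
  calc gaussMoment n a * gaussMoment m b * √(I (f * f * (f * f)))
      ≤ √(gaussMoment n (2 * a) * gaussMoment m (2 * b)) * √(I (f * f * (f * f))) := by gcongr
    _ = √(gaussMoment n (2 * a) * gaussMoment m (2 * b) * I (f * f * (f * f))) :=
        (Real.sqrt_mul (mul_pos (gaussMoment_pos hn _) (gaussMoment_pos hm _)).le _).symm
    _ ≤ _ := hfour.trans_eq (mul_left_comm _ _ _)

lemma mul_sq_le (hI : IsBisphereAverage n m I) (hn : 0 < n) (hm : 0 < m)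
    (hf : f ∈ Biform n m a b) (hg : g ∈ Biform n m a b) :
    I (f * g * (f * g)) ≤ (4 ^ (a + b)) ^ 2 * (I (f * f) * I (g * g)) :=
  calc I (f * g * (f * g)) = I (f * f * (g * g)) := by rw [mul_mul_mul_comm]
    _ ≤ √(I (f * f * (f * f))) * √(I (g * g * (g * g))) :=
        apply_mul_le_sqrt_mul_sqrt hI.mul_self_nonneg _ _
    _ ≤ 4 ^ (a + b) * I (f * f) * (4 ^ (a + b) * I (g * g)) :=
        mul_le_mul (hI.sqrt_pow_four_le hn hm hf) (hI.sqrt_pow_four_le hn hm hg)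
          (Real.sqrt_nonneg _) (mul_nonneg (by positivity) (hI.mul_self_nonneg f))
    _ = _ := by ring

lemma apolarForm_mul_sq_le (hI : IsBisphereAverage n m I) (hf : f ∈ Biform n m a b)
    (hg : g ∈ Biform n m a b) (hh : h ∈ Biform n m (2 * a) (2 * b)) :
    apolarForm (f * g) h ^ 2 ≤ (2 ^ (a + b) * (gaussMoment n a * gaussMoment m b)) ^ 2 *
      (I (f * f) * I (g * g)) * (gaussMoment n (2 * a) * gaussMoment m (2 * b) * I (h * h)) := by
  have hfg : apolarForm (f * g) (f * g) ≤
      (2 ^ (a + b) * (gaussMoment n a * gaussMoment m b)) ^ 2 * (I (f * f) * I (g * g)) :=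
    calc apolarForm (f * g) (f * g)
        ≤ 2 ^ (a + b + (a + b)) * (apolarForm f f * apolarForm g g) :=
          apolarForm_mul_self_le (isHomogeneous_of_mem_biform hf) (isHomogeneous_of_mem_biform hg)
      _ ≤ 2 ^ (a + b + (a + b)) * ((gaussMoment n a * gaussMoment m b * I (f * f)) *
            (gaussMoment n a * gaussMoment m b * I (g * g))) := by
          gcongr
          · exact apolarForm_self_nonneg g
          · exact (apolarForm_self_nonneg f).trans (hI.apolarForm_self_le hf)
          · exact hI.apolarForm_self_le hf
          · exact hI.apolarForm_self_le hg
      _ = _ := by ring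
  exact (apolarForm_sq_le _ _).trans (mul_le_mul hfg (hI.apolarForm_self_le hh)
    (apolarForm_self_nonneg h) ((apolarForm_self_nonneg _).trans hfg))

end IsBisphereAverage

end BisphereAverage

section LinearSubstitution

variable {ι : Type*} [Fintype ι]

/-- The substitution `f ↦ f ∘ Q` of a linear map, given by its matrix. -/
def linearSubst (Q : Matrix ι ι ℝ) : MvPolynomial ι ℝ →ₐ[ℝ] MvPolynomial ι ℝ :=
  bind₁ fun k => ∑ l, Q k l • X l

/-- The derivation `f ↦ ∑ k l, A k l • X l * ∂ₖ f`, that is, differentiation along the linear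
vector field with matrix `A`. -/
def linearVectorField (A : Matrix ι ι ℝ) : Derivation ℝ (MvPolynomial ι ℝ) (MvPolynomial ι ℝ) :=
  mkDerivation ℝ fun k => ∑ l, A k l • X l

lemma linearSubst_X (Q : Matrix ι ι ℝ) (k : ι) : linearSubst Q (X k) = ∑ l, Q k l • X l :=
  bind₁_X_right _ _

lemma linearSubst_one [DecidableEq ι] (f : MvPolynomial ι ℝ) : linearSubst 1 f = f := by
  have h : (fun k => ∑ l, (1 : Matrix ι ι ℝ) k l • X l) = (X : ι → MvPolynomial ι ℝ) := by
    ext1 k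
    simp [Matrix.one_apply]
  rw [linearSubst, h, bind₁_X_left, AlgHom.id_apply]

lemma eval_linearSubst (Q : Matrix ι ι ℝ) (x : ι → ℝ) (f : MvPolynomial ι ℝ) :
    eval x (linearSubst Q f) = eval (Q.mulVec x) f := by
  rw [linearSubst, ← coe_aeval_eq_eval, ← coe_aeval_eq_eval, RingHom.coe_coe, RingHom.coe_coe,
    aeval_bind₁]
  congr 2
  ext1 k
  simp [Matrix.mulVec, dotProduct]

lemma linearVectorField_X (A : Matrix ι ι ℝ) (k : ι) :
    linearVectorField A (X k) = ∑ l, A k l • X l :=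
  mkDerivation_X _ _ _

lemma linearVectorField_single_sub_single [DecidableEq ι] (i j : ι) (f : MvPolynomial ι ℝ) :
    linearVectorField (Matrix.single i j 1 - Matrix.single j i 1) f =
      X j * pderiv i f - X i * pderiv j f := by
  have h : linearVectorField (Matrix.single i j 1 - Matrix.single j i 1) =
      (X j : MvPolynomial ι ℝ) • pderiv i - (X i : MvPolynomial ι ℝ) • pderiv j := by
    refine derivation_ext fun k => ?_
    simp [linearVectorField_X, Matrix.single_apply, sub_smul, pderiv_X, Pi.single_apply, ite_and,
      eq_comm]
  rw [h]
  simp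

lemma hasDerivAt_apply_linearSubst [DecidableEq ι] {r : ℝ → Matrix ι ι ℝ} {A : Matrix ι ι ℝ}
    (h0 : r 0 = 1) (hr : ∀ k l, HasDerivAt (fun t => r t k l) (A k l) 0) (f : MvPolynomial ι ℝ)
    (L : MvPolynomial ι ℝ →ₗ[ℝ] ℝ) :
    HasDerivAt (fun t => L (linearSubst (r t) f)) (L (linearVectorField A f)) 0 := by
  induction f using MvPolynomial.induction_on generalizing L with
  | C c => simpa [algHom_C] using hasDerivAt_const _ _
  | add p q hp hq =>
    simp only [map_add]
    exact (hp L).fun_add (hq L)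
  | mul_X p i hp =>
    have hterm : ∀ l, HasDerivAt (fun t => r t i l * L (linearSubst (r t) p * X l))
        (A i l * L (p * X l) + (1 : Matrix ι ι ℝ) i l * L (linearVectorField A p * X l)) 0 :=
      fun l => by
        have h := (hr i l).fun_mul (hp (L ∘ₗ LinearMap.mulRight ℝ (X l)))
        simpa only [LinearMap.comp_apply, LinearMap.mulRight_apply, h0, linearSubst_one] using h
    have hsubst : (fun t => L (linearSubst (r t) (p * X i))) =
        fun t => ∑ l, r t i l * L (linearSubst (r t) p * X l) := by
      ext t
      rw [map_mul, linearSubst_X, Finset.mul_sum, map_sum]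
      simp only [mul_smul_comm, map_smul, smul_eq_mul]
    have hfield : L (linearVectorField A (p * X i)) = ∑ l, (A i l * L (p * X l) +
        (1 : Matrix ι ι ℝ) i l * L (linearVectorField A p * X l)) := by
      rw [Derivation.leibniz, linearVectorField_X, map_add, Finset.smul_sum, map_sum]
      simp [Finset.sum_add_distrib, Matrix.one_apply, mul_comm]
    rw [hsubst, hfield]
    exact HasDerivAt.fun_sum fun l _ => hterm l

end LinearSubstitution

section Rotations

open NormedSpace

variable {ι : Type*} [Fintype ι] [DecidableEq ι] {A : Matrix ι ι ℝ}

lemma exp_mul_transpose_of_transpose_eq_neg (hA : A.transpose = -A) :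
    exp A * (exp A).transpose = 1 := by
  rw [← Matrix.exp_transpose, hA, Matrix.exp_neg]
  exact Matrix.mul_nonsing_inv _ ((Matrix.isUnit_iff_isUnit_det _).mp (Matrix.isUnit_exp A))

open scoped Matrix.Norms.Operator in
lemma hasDerivAt_exp_smul_apply (A : Matrix ι ι ℝ) (k l : ι) :
    HasDerivAt (fun t : ℝ => exp (t • A) k l) (A k l) 0 := by
  have h := hasDerivAt_exp_smul_const (𝕂 := ℝ) A (0 : ℝ)
  rw [zero_smul, exp_zero, one_mul] at h
  exact (hasDerivAt_pi.mp (hasDerivAt_pi.mp h k)) l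

end Rotations

section SphereMeasure

lemma isCompact_unitSphere (n : ℕ) : IsCompact (unitSphere n) := by
  refine Metric.isCompact_of_isClosed_isBounded (isClosed_eq (by fun_prop) continuous_const) ?_
  refine (Metric.isBounded_closedBall (x := (0 : Fin n → ℝ)) (r := 1)).subset fun x hx => ?_
  rw [mem_closedBall_zero_iff, pi_norm_le_iff_of_nonneg zero_le_one]
  refine fun i => (sq_le_one_iff_abs_le_one _).mp ?_
  rw [← show ∑ j, x j ^ 2 = 1 from hx]
  exact Finset.single_le_sum (f := fun j => x j ^ 2) (fun j _ => sq_nonneg _) (Finset.mem_univ i)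

variable {n m : ℕ} {σ₁ : Measure (Fin n → ℝ)} {σ₂ : Measure (Fin m → ℝ)}

lemma continuous_beval (f : MvPolynomial (Fin n ⊕ Fin m) ℝ) :
    Continuous fun z : (Fin n → ℝ) × (Fin m → ℝ) => beval f z.1 z.2 := by
  refine (continuous_eval f).comp (continuous_pi fun i => ?_)
  rcases i with i | i
  · exact (continuous_apply i).comp continuous_fst
  · exact (continuous_apply i).comp continuous_snd

lemma ae_mem_unitSphere_prod (hσ₁ : IsSphereMeasure n σ₁) (hσ₂ : IsSphereMeasure m σ₂) :
    ∀ᵐ z ∂(σ₁.prod σ₂), z ∈ unitSphere n ×ˢ unitSphere m := by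
  have := hσ₁.prob
  have := hσ₂.prob
  have hx : ∀ᵐ x ∂σ₁, x ∈ unitSphere n := hσ₁.onSphere
  have hy : ∀ᵐ y ∂σ₂, y ∈ unitSphere m := hσ₂.onSphere
  filter_upwards [Measure.quasiMeasurePreserving_fst.ae hx,
    Measure.quasiMeasurePreserving_snd.ae hy] with z hzx hzy using ⟨hzx, hzy⟩

lemma integrable_beval (hσ₁ : IsSphereMeasure n σ₁) (hσ₂ : IsSphereMeasure m σ₂)
    (f : MvPolynomial (Fin n ⊕ Fin m) ℝ) :
    Integrable (fun z : (Fin n → ℝ) × (Fin m → ℝ) => beval f z.1 z.2) (σ₁.prod σ₂) := by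
  have := hσ₁.prob
  have := hσ₂.prob
  obtain ⟨c, hc⟩ := ((isCompact_unitSphere n).prod
    (isCompact_unitSphere m)).exists_bound_of_continuousOn (continuous_beval f).continuousOn
  refine Integrable.of_bound (continuous_beval f).aestronglyMeasurable c ?_
  filter_upwards [ae_mem_unitSphere_prod hσ₁ hσ₂] with z hz using hc z hz

/-- The average over the product of the two spheres, as a linear functional on polynomials. -/
def sphereAverage (hσ₁ : IsSphereMeasure n σ₁) (hσ₂ : IsSphereMeasure m σ₂) :
    MvPolynomial (Fin n ⊕ Fin m) ℝ →ₗ[ℝ] ℝ where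
  toFun f := ∫ z, beval f z.1 z.2 ∂(σ₁.prod σ₂)
  map_add' f g := by
    simpa [beval] using integral_add (integrable_beval hσ₁ hσ₂ f) (integrable_beval hσ₁ hσ₂ g)
  map_smul' c f := by simp [beval, integral_const_mul]

lemma sphereAverage_apply (hσ₁ : IsSphereMeasure n σ₁) (hσ₂ : IsSphereMeasure m σ₂)
    (f : MvPolynomial (Fin n ⊕ Fin m) ℝ) :
    sphereAverage hσ₁ hσ₂ f = ∫ z, beval f z.1 z.2 ∂(σ₁.prod σ₂) := rfl

lemma bavg_eq_sphereAverage (hσ₁ : IsSphereMeasure n σ₁) (hσ₂ : IsSphereMeasure m σ₂)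
    (f : MvPolynomial (Fin n ⊕ Fin m) ℝ) : bavg σ₁ σ₂ f = sphereAverage hσ₁ hσ₂ f := by
  have := hσ₁.prob
  have := hσ₂.prob
  exact (integral_prod _ (integrable_beval hσ₁ hσ₂ f)).symm

lemma bip_eq_sphereAverage (hσ₁ : IsSphereMeasure n σ₁) (hσ₂ : IsSphereMeasure m σ₂)
    (f g : MvPolynomial (Fin n ⊕ Fin m) ℝ) : bip σ₁ σ₂ f g = sphereAverage hσ₁ hσ₂ (f * g) := by
  rw [← bavg_eq_sphereAverage hσ₁ hσ₂]
  simp [bip, bavg, beval]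

lemma measurePreserving_mulVec (hσ₁ : IsSphereMeasure n σ₁) {Q : Matrix (Fin n) (Fin n) ℝ}
    (hQ : Q * Q.transpose = 1) : MeasurePreserving Q.mulVec σ₁ σ₁ :=
  ⟨(Continuous.matrix_mulVec continuous_const continuous_id).measurable, hσ₁.invariant _ hQ⟩

lemma sphereAverage_linearSubst (hσ₁ : IsSphereMeasure n σ₁) (hσ₂ : IsSphereMeasure m σ₂)
    {Q₁ : Matrix (Fin n) (Fin n) ℝ} {Q₂ : Matrix (Fin m) (Fin m) ℝ}
    (h₁ : Q₁ * Q₁.transpose = 1) (h₂ : Q₂ * Q₂.transpose = 1)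
    (f : MvPolynomial (Fin n ⊕ Fin m) ℝ) :
    sphereAverage hσ₁ hσ₂ (linearSubst (Matrix.fromBlocks Q₁ 0 0 Q₂) f) =
      sphereAverage hσ₁ hσ₂ f := by
  have := hσ₁.prob
  have := hσ₂.prob
  have hprod := (measurePreserving_mulVec hσ₁ h₁).prod (measurePreserving_mulVec hσ₂ h₂)
  have hint := integral_map hprod.measurable.aemeasurable
    (continuous_beval f).aestronglyMeasurable (μ := σ₁.prod σ₂)
  rw [hprod.map_eq] at hint
  rw [sphereAverage_apply, sphereAverage_apply, hint]
  simp [beval, eval_linearSubst, Matrix.fromBlocks_mulVec, Function.comp_def]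

lemma sphereAverage_linearVectorField (hσ₁ : IsSphereMeasure n σ₁) (hσ₂ : IsSphereMeasure m σ₂)
    {A₁ : Matrix (Fin n) (Fin n) ℝ} {A₂ : Matrix (Fin m) (Fin m) ℝ}
    (h₁ : A₁.transpose = -A₁) (h₂ : A₂.transpose = -A₂) (f : MvPolynomial (Fin n ⊕ Fin m) ℝ) :
    sphereAverage hσ₁ hσ₂ (linearVectorField (Matrix.fromBlocks A₁ 0 0 A₂) f) = 0 := by
  have hderiv := hasDerivAt_apply_linearSubst
    (r := fun t => Matrix.fromBlocks (NormedSpace.exp (t • A₁)) 0 0 (NormedSpace.exp (t • A₂)))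
    (A := Matrix.fromBlocks A₁ 0 0 A₂) (by simp)
    (by
      rintro (k | k) (l | l)
      · exact hasDerivAt_exp_smul_apply A₁ k l
      · exact hasDerivAt_const _ _
      · exact hasDerivAt_const _ _
      · exact hasDerivAt_exp_smul_apply A₂ k l) f (sphereAverage hσ₁ hσ₂)
  have hconst : ∀ t : ℝ, sphereAverage hσ₁ hσ₂ (linearSubst (Matrix.fromBlocks
      (NormedSpace.exp (t • A₁)) 0 0 (NormedSpace.exp (t • A₂))) f) = sphereAverage hσ₁ hσ₂ f :=
    fun t => sphereAverage_linearSubst hσ₁ hσ₂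
      (exp_mul_transpose_of_transpose_eq_neg (by rw [Matrix.transpose_smul, h₁, smul_neg]))
      (exp_mul_transpose_of_transpose_eq_neg (by rw [Matrix.transpose_smul, h₂, smul_neg])) f
  simp_rw [hconst] at hderiv
  exact hderiv.unique (hasDerivAt_const _ _)

lemma transpose_single_sub_single {ι : Type*} [DecidableEq ι] (i j : ι) :
    (Matrix.single i j (1 : ℝ) - Matrix.single j i 1).transpose =
      -(Matrix.single i j 1 - Matrix.single j i 1) := by
  simp

lemma isSphereAverage_xVars (hσ₁ : IsSphereMeasure n σ₁) (hσ₂ : IsSphereMeasure m σ₂) :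
    IsSphereAverage (xVars n m) (sphereAverage hσ₁ hσ₂) where
  sum_X_sq_mul f := by
    refine integral_congr_ae ?_
    filter_upwards [ae_mem_unitSphere_prod hσ₁ hσ₂] with z hz
    have h : ∑ i, z.1 i ^ 2 = 1 := hz.1
    simp [beval, xVars, h]
  X_mul_pderiv := by
    simp only [xVars, Finset.forall_mem_map, Finset.mem_univ, forall_const]
    intro i j f
    have h := sphereAverage_linearVectorField hσ₁ hσ₂ (transpose_single_sub_single j i)
      (A₂ := 0) (by simp) f
    have hblocks : Matrix.fromBlocks (Matrix.single j i 1 - Matrix.single i j 1) 0 0 0 =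
        (Matrix.single (Sum.inl j) (Sum.inl i) 1 - Matrix.single (Sum.inl i) (Sum.inl j) 1 :
          Matrix (Fin n ⊕ Fin m) (Fin n ⊕ Fin m) ℝ) := by
      ext (k | k) (l | l) <;> simp [Matrix.single_apply]
    rwa [hblocks, linearVectorField_single_sub_single, map_sub, sub_eq_zero] at h

lemma isSphereAverage_yVars (hσ₁ : IsSphereMeasure n σ₁) (hσ₂ : IsSphereMeasure m σ₂) :
    IsSphereAverage (yVars n m) (sphereAverage hσ₁ hσ₂) where
  sum_X_sq_mul f := by
    refine integral_congr_ae ?_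
    filter_upwards [ae_mem_unitSphere_prod hσ₁ hσ₂] with z hz
    have h : ∑ i, z.2 i ^ 2 = 1 := hz.2
    simp [beval, yVars, h]
  X_mul_pderiv := by
    simp only [yVars, Finset.forall_mem_map, Finset.mem_univ, forall_const]
    intro i j f
    have h := sphereAverage_linearVectorField hσ₁ hσ₂ (A₁ := 0) (by simp)
      (transpose_single_sub_single j i) f
    have hblocks : Matrix.fromBlocks 0 0 0 (Matrix.single j i 1 - Matrix.single i j 1) =
        (Matrix.single (Sum.inr j) (Sum.inr i) 1 - Matrix.single (Sum.inr i) (Sum.inr j) 1 :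
          Matrix (Fin n ⊕ Fin m) (Fin n ⊕ Fin m) ℝ) := by
      ext (k | k) (l | l) <;> simp [Matrix.single_apply]
    rwa [hblocks, linearVectorField_single_sub_single, map_sub, sub_eq_zero] at h

lemma isBisphereAverage_sphereAverage (hσ₁ : IsSphereMeasure n σ₁) (hσ₂ : IsSphereMeasure m σ₂) :
    IsBisphereAverage n m (sphereAverage hσ₁ hσ₂) where
  one := by
    have := hσ₁.prob
    have := hσ₂.prob
    simp [sphereAverage_apply, beval]
  mul_self_nonneg f := by
    simp only [sphereAverage_apply, beval, map_mul]
    exact integral_nonneg fun z => mul_self_nonneg _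
  xSphere := isSphereAverage_xVars hσ₁ hσ₂
  ySphere := isSphereAverage_yVars hσ₁ hσ₂

end SphereMeasure

/-! ### Nets and volumes in Euclidean spaces -/

section Nets

variable {E : Type*} [NormedAddCommGroup E] [NormedSpace ℝ E]

lemma packingNumber_one_closedBall_two_le [FiniteDimensional ℝ E] :
    Metric.packingNumber 1 (Metric.closedBall (0 : E) 2) ≤ (5 ^ Module.finrank ℝ E : ℕ) := by
  refine iSup_le fun s => iSup₂_le fun hs hsep => ?_
  by_contra! hlt
  obtain ⟨t, hts, ht⟩ := Set.exists_subset_encard_eq (Order.add_one_le_of_lt hlt)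
  have hfin : t.Finite :=
    Set.finite_of_encard_eq_coe (k := 5 ^ Module.finrank ℝ E + 1) (mod_cast ht)
  have hcard : hfin.toFinset.card ≤ 5 ^ Module.finrank ℝ E := by
    refine Besicovitch.card_le_of_separated _ (fun x hx => ?_) fun x hx y hy hxy => ?_
    · exact mem_closedBall_zero_iff.mp (hs (hts (hfin.mem_toFinset.mp hx)))
    · have h : (1 : NNReal) < edist x y :=
        hsep (hts (hfin.mem_toFinset.mp hx)) (hts (hfin.mem_toFinset.mp hy)) hxy
      rw [edist_dist, ENNReal.coe_one, ENNReal.one_lt_ofReal, dist_eq_norm] at h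
      exact h.le
  rw [hfin.encard_eq_coe_toFinset_card] at ht
  have : hfin.toFinset.card = 5 ^ Module.finrank ℝ E + 1 := mod_cast ht
  omega

/- If `f < u` on the cover, then every point of the doubled ball is a point of the cover plus a
vector of norm at most `1`, whence `2 * ‖f‖ ≤ u + ‖f‖`. -/
lemma closedBall_subset_convexHull_of_isCover {s : Set E} (hs : s.Finite)
    (hcover : Metric.IsCover 1 (Metric.closedBall (0 : E) 2) s) :
    Metric.closedBall (0 : E) 1 ⊆ convexHull ℝ s := by
  intro g hg
  by_contra hgs
  obtain ⟨f, u, hfs, hfg⟩ := geometric_hahn_banach_closed_point (convex_convexHull ℝ s)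
    (hs.isClosed_convexHull ℝ) hgs
  have hbound : ∀ x, ‖x‖ ≤ 1 → f x ≤ (u + ‖f‖) / 2 := by
    intro x hx
    obtain ⟨y, hys, hxy⟩ := hcover (show (2 : ℝ) • x ∈ Metric.closedBall 0 2 by
      rw [mem_closedBall_zero_iff, norm_smul, Real.norm_ofNat]
      linarith)
    have hxy' : ‖(2 : ℝ) • x - y‖ ≤ 1 := by
      rwa [← dist_eq_norm, ← ENNReal.ofReal_le_one, ← edist_dist]
    have hf := (le_abs_self _).trans (f.le_of_opNorm_le_of_le le_rfl hxy')
    have hfy := hfs y (subset_convexHull ℝ s hys)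
    rw [map_sub, map_smul, smul_eq_mul] at hf
    linarith
  have hnorm : ‖f‖ ≤ (u + ‖f‖) / 2 := by
    refine f.opNorm_le_of_unit_norm (by simpa using hbound 0 (by simp)) fun x hx => ?_
    refine abs_le'.mpr ⟨hbound x hx.le, ?_⟩
    rw [← map_neg]
    exact hbound (-x) (by rw [norm_neg, hx])
  linarith [hbound g (mem_closedBall_zero_iff.mp hg)]

lemma exists_finset_closedBall_subset_convexHull (E : Type*) [NormedAddCommGroup E]
    [NormedSpace ℝ E] [FiniteDimensional ℝ E] :
    ∃ Γ : Finset E, Γ.card ≤ 5 ^ Module.finrank ℝ E ∧ (∀ γ ∈ Γ, ‖γ‖ ≤ 2) ∧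
      Metric.closedBall (0 : E) 1 ⊆ convexHull ℝ (Γ : Set E) := by
  have hpack := packingNumber_one_closedBall_two_le (E := E)
  have htop := (hpack.trans_lt (ENat.natCast_lt_top _)).ne
  obtain ⟨hfin, hcard⟩ := Set.encard_le_coe_iff_finite_ncard_le.mp
    ((Metric.encard_maximalSeparatedSet htop).trans_le hpack)
  refine ⟨hfin.toFinset, by rwa [← Set.ncard_eq_toFinset_card _ hfin], fun γ hγ => ?_, ?_⟩
  · exact mem_closedBall_zero_iff.mp
      (Metric.maximalSeparatedSet_subset (hfin.mem_toFinset.mp hγ))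
  · rw [hfin.coe_toFinset]
    exact closedBall_subset_convexHull_of_isCover hfin (Metric.isCover_maximalSeparatedSet htop)

open scoped Pointwise in
lemma mul_mem_convexHull_mul {A : Type*} [CommRing A] [Algebra ℝ A] {s t : Set A} {x y : A}
    (hx : x ∈ convexHull ℝ s) (hy : y ∈ convexHull ℝ t) : x * y ∈ convexHull ℝ (s * t) := by
  have hleft : ∀ a ∈ s, a * y ∈ convexHull ℝ (s * t) := fun a ha => by
    refine convexHull_min (s := t) (t := LinearMap.mulLeft ℝ a ⁻¹' convexHull ℝ (s * t))
      (fun b hb => subset_convexHull ℝ _ (Set.mul_mem_mul ha hb))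
      ((convex_convexHull ℝ _).linear_preimage _) hy
  exact convexHull_min (t := LinearMap.mulRight ℝ y ⁻¹' convexHull ℝ (s * t)) hleft
    ((convex_convexHull ℝ _).linear_preimage _) hx

end Nets

section EuclideanGeometry

variable {E : Type*} [NormedAddCommGroup E] [InnerProductSpace ℝ E]

lemma exists_inner_le_of_mem_convexHull {s : Set E} {x : E} (hx : x ∈ convexHull ℝ s) (e : E) :
    ∃ w ∈ s, inner ℝ e w ≤ inner ℝ e x :=
  ((innerₛₗ ℝ e).concaveOn convex_univ).exists_le_of_mem_convexHull s.subset_univ hx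

/- Maurey's empirical method, derandomized: the points are chosen greedily. -/
lemma exists_norm_sum_sub_sq_le {W : Set E} {x : E} {r : ℝ} (hW : ∀ w ∈ W, ‖w‖ ≤ r)
    (hx : x ∈ convexHull ℝ W) (s : ℕ) :
    ∃ w : Fin s → W, ‖∑ j, ((w j : E) - x)‖ ^ 2 ≤ s * r ^ 2 := by
  induction s with
  | zero => exact ⟨Fin.elim0, by simp⟩
  | succ s ih =>
    obtain ⟨w, hw⟩ := ih
    set S := ∑ j, ((w j : E) - x) with hS
    obtain ⟨v, hv, hle⟩ := exists_inner_le_of_mem_convexHull hx (S - x)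
    refine ⟨Fin.cons ⟨v, hv⟩ w, ?_⟩
    have hvr : ‖v‖ ^ 2 ≤ r ^ 2 := by gcongr; exact hW v hv
    have hstep : ‖v + (S - x)‖ ^ 2 ≤ ‖S‖ ^ 2 + r ^ 2 := by
      rw [inner_sub_left, inner_sub_left, real_inner_self_eq_norm_sq] at hle
      rw [norm_add_sq_real, norm_sub_sq_real, real_inner_comm, inner_sub_left]
      linarith [sq_nonneg ‖x‖]
    rw [Fin.sum_univ_succ]
    simp only [Fin.cons_zero, Fin.cons_succ]
    rw [← hS, sub_add_eq_add_sub, add_sub_assoc]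
    push_cast
    linarith

lemma mem_closedBall_of_inner_gt {u x : E} {ρ β τ : ℝ} (hρ : 0 < ρ) (hβ : 0 < β)
    (hτ : 0 ≤ τ) (hu : ‖u‖ ≤ β) (hx : ‖x‖ ≤ ρ) (hux : τ * ρ * β < inner ℝ u x) :
    x ∈ Metric.closedBall ((τ * ρ / β) • u) (ρ * Real.exp (-(τ ^ 2 / 2))) := by
  have hcenter : ‖(τ * ρ / β) • u‖ ^ 2 ≤ (τ * ρ) ^ 2 := by
    have h0 : 0 ≤ τ * ρ / β := by positivity
    rw [norm_smul, Real.norm_of_nonneg h0]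
    gcongr ?_ ^ 2
    calc τ * ρ / β * ‖u‖ ≤ τ * ρ / β * β := by gcongr
      _ = τ * ρ := div_mul_cancel₀ _ hβ.ne'
  have hinner : (τ * ρ) ^ 2 ≤ inner ℝ x ((τ * ρ / β) • u) := by
    rw [real_inner_comm, real_inner_smul_left]
    calc (τ * ρ) ^ 2 = τ * ρ / β * (τ * ρ * β) := by field_simp
      _ ≤ _ := by gcongr
  have hradius : ρ ^ 2 * (1 - τ ^ 2) ≤ (ρ * Real.exp (-(τ ^ 2 / 2))) ^ 2 := by
    rw [mul_pow, ← Real.exp_nat_mul, show ((2 : ℕ) : ℝ) * -(τ ^ 2 / 2) = -τ ^ 2 by push_cast; ring]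
    gcongr
    linarith [Real.add_one_le_exp (-τ ^ 2)]
  have hxρ : ‖x‖ ^ 2 ≤ ρ ^ 2 := by gcongr
  rw [mem_closedBall_iff_norm, ← sq_le_sq₀ (norm_nonneg _) (by positivity), norm_sub_sq_real]
  linarith

variable [FiniteDimensional ℝ E] {V : Type*} [AddCommGroup V] [Module ℝ V]

/-- The linear map sending `p` to the vector of `E` that represents the linear functional `B p`
with respect to the inner product. -/
def rieszMap (B : V →ₗ[ℝ] E →ₗ[ℝ] ℝ) : V →ₗ[ℝ] E where
  toFun p := (InnerProductSpace.toDual ℝ E).symm (LinearMap.toContinuousLinearMap (B p))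
  map_add' p q := by simp
  map_smul' c p := by simp

lemma inner_rieszMap (B : V →ₗ[ℝ] E →ₗ[ℝ] ℝ) (p : V) (y : E) :
    inner ℝ (rieszMap B p) y = B p y := by
  simp [rieszMap]

lemma norm_rieszMap_le {B : V →ₗ[ℝ] E →ₗ[ℝ] ℝ} {p : V} {c : ℝ} (hc : 0 ≤ c)
    (h : ∀ y, B p y ^ 2 ≤ c ^ 2 * ‖y‖ ^ 2) : ‖rieszMap B p‖ ≤ c := by
  rw [rieszMap, LinearMap.coe_mk, AddHom.coe_mk, LinearIsometryEquiv.norm_map]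
  refine ContinuousLinearMap.opNorm_le_bound _ hc fun y => abs_le_of_sq_le_sq ?_ (by positivity)
  rw [mul_pow]
  exact h y

end EuclideanGeometry

section Volume

open Metric

variable {E : Type*} [NormedAddCommGroup E] [InnerProductSpace ℝ E]
  [MeasurableSpace E] [BorelSpace E] (μ : Measure E) [μ.IsAddHaarMeasure]

lemma measure_convexHull_finset_le {W : Finset E} {r : ℝ} (hW : ∀ w ∈ W, ‖w‖ ≤ r) {s : ℕ}
    (hs : 0 < s) :
    μ (convexHull ℝ (W : Set E)) ≤ W.card ^ s * μ (closedBall 0 (r / √s)) := by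
  have hs' : (0 : ℝ) < s := Nat.cast_pos.mpr hs
  have hcover : convexHull ℝ (W : Set E) ⊆
      ⋃ w : Fin s → W, closedBall ((s : ℝ)⁻¹ • ∑ j, (w j : E)) (r / √s) := by
    intro x hx
    obtain ⟨w₀, hw₀⟩ := convexHull_nonempty_iff.mp ⟨x, hx⟩
    have hr : 0 ≤ r := (norm_nonneg _).trans (hW w₀ hw₀)
    obtain ⟨w, hw⟩ := exists_norm_sum_sub_sq_le hW hx s
    refine Set.mem_iUnion.mpr ⟨w, ?_⟩
    have hcenter : (s : ℝ)⁻¹ • ∑ j, (w j : E) - x = (s : ℝ)⁻¹ • ∑ j, ((w j : E) - x) := by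
      rw [Finset.sum_sub_distrib, smul_sub, Finset.sum_const, Finset.card_univ, Fintype.card_fin,
        ← Nat.cast_smul_eq_nsmul ℝ, inv_smul_smul₀ hs'.ne']
    rw [mem_closedBall_iff_norm', hcenter, norm_smul, norm_inv, Real.norm_natCast,
      ← sq_le_sq₀ (by positivity) (by positivity), mul_pow, div_pow, Real.sq_sqrt hs'.le,
      le_div_iff₀ hs']
    calc (s : ℝ)⁻¹ ^ 2 * ‖∑ j, ((w j : E) - x)‖ ^ 2 * s
        ≤ (s : ℝ)⁻¹ ^ 2 * (s * r ^ 2) * s := by gcongr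
      _ = r ^ 2 := by field_simp
  calc μ (convexHull ℝ (W : Set E))
      ≤ ∑ w : Fin s → W, μ (closedBall ((s : ℝ)⁻¹ • ∑ j, (w j : E)) (r / √s)) :=
        (measure_mono hcover).trans (measure_iUnion_fintype_le _ _)
    _ = W.card ^ s * μ (closedBall 0 (r / √s)) := by
        simp [Measure.addHaar_closedBall_center]

variable [FiniteDimensional ℝ E]

lemma measure_closedBall_half_le [Nontrivial E] (ρ : ℝ) :
    μ (closedBall 0 (ρ / 2)) ≤ ENNReal.ofReal (1 / 2) * μ (closedBall 0 ρ) := by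
  rw [← one_div_mul_eq_div, Measure.addHaar_closedBall_mul_of_pos μ _ one_half_pos]
  gcongr
  exact pow_le_of_le_one (by norm_num) (by norm_num) Module.finrank_pos.ne'

lemma measure_closedBall_half_le_of_halfspaces [Nontrivial E] {U : Finset E} {ρ β τ : ℝ}
    (hρ : 0 < ρ) (hβ : 0 < β) (hτ : 0 ≤ τ) (hU : ∀ u ∈ U, ‖u‖ ≤ β)
    (hcard : U.card * Real.exp (-(τ ^ 2 / 2)) ^ Module.finrank ℝ E ≤ 1 / 2) :
    μ (closedBall 0 (ρ / 2)) ≤ μ {x | ∀ u ∈ U, inner ℝ u x ≤ τ * ρ * β} := by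
  set K := {x | ∀ u ∈ U, inner ℝ u x ≤ τ * ρ * β}
  set δ := ρ * Real.exp (-(τ ^ 2 / 2))
  have hδ : 0 < δ := by positivity
  have hcover : closedBall 0 ρ ⊆ K ∪ ⋃ u ∈ U, closedBall ((τ * ρ / β) • u) δ := by
    intro x hx
    by_cases hxK : x ∈ K
    · exact Or.inl hxK
    · obtain ⟨u, hu, hux⟩ : ∃ u ∈ U, τ * ρ * β < inner ℝ u x := by simpa [K] using hxK
      exact Or.inr (Set.mem_iUnion₂.mpr ⟨u, hu, mem_closedBall_of_inner_gt hρ hβ hτ (hU u hu)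
        (mem_closedBall_zero_iff.mp hx) hux⟩)
  have hcaps : μ (⋃ u ∈ U, closedBall ((τ * ρ / β) • u) δ) ≤
      ENNReal.ofReal (1 / 2) * μ (closedBall 0 ρ) := by
    refine (measure_biUnion_finset_le _ _).trans ?_
    simp_rw [Measure.addHaar_closedBall_center]
    rw [Finset.sum_const, nsmul_eq_mul, Measure.addHaar_closedBall μ _ hδ.le,
      Measure.addHaar_closedBall μ _ hρ.le, ← mul_assoc, ← mul_assoc, ← ENNReal.ofReal_natCast,
      ← ENNReal.ofReal_mul (by positivity), ← ENNReal.ofReal_mul (by positivity)]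
    gcongr ENNReal.ofReal ?_ * _
    calc U.card * δ ^ Module.finrank ℝ E
        = U.card * Real.exp (-(τ ^ 2 / 2)) ^ Module.finrank ℝ E * ρ ^ Module.finrank ℝ E := by
          rw [mul_pow]; ring
      _ ≤ 1 / 2 * ρ ^ Module.finrank ℝ E := by gcongr
  have hfin : ENNReal.ofReal (1 / 2) * μ (closedBall 0 ρ) ≠ ⊤ :=
    ENNReal.mul_ne_top ENNReal.ofReal_ne_top measure_closedBall_lt_top.ne
  refine (measure_closedBall_half_le μ ρ).trans (ENNReal.le_of_add_le_add_right hfin ?_)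
  calc ENNReal.ofReal (1 / 2) * μ (closedBall 0 ρ) + ENNReal.ofReal (1 / 2) * μ (closedBall 0 ρ)
      = μ (closedBall 0 ρ) := by
        rw [← add_mul, ← ENNReal.ofReal_add (by norm_num) (by norm_num), add_halves,
          ENNReal.ofReal_one, one_mul]
    _ ≤ μ K + ENNReal.ofReal (1 / 2) * μ (closedBall 0 ρ) :=
        (measure_mono hcover).trans ((measure_union_le _ _).trans (by gcongr))

lemma rpow_measure_div_measure_closedBall_bounds [Nontrivial E] {K : Set E} {d e : ℝ}
    (hd : 0 ≤ d) (he : 0 ≤ e) (hdK : μ (closedBall 0 d) ≤ μ K) (hKe : μ K ≤ μ (closedBall 0 e)) :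
    (μ K / μ (closedBall 0 1)) ^ (1 / (Module.finrank ℝ E : ℝ)) ∈
      Set.Icc (ENNReal.ofReal d) (ENNReal.ofReal e) := by
  have hroot : ∀ c : ℝ, 0 ≤ c → (μ (closedBall (0 : E) c) / μ (closedBall 0 1)) ^
      (1 / (Module.finrank ℝ E : ℝ)) = ENNReal.ofReal c := by
    intro c hc
    rw [Measure.addHaar_closedBall' μ _ hc, ENNReal.mul_div_cancel_right
      (measure_closedBall_pos μ _ one_pos).ne' measure_closedBall_lt_top.ne,
      ENNReal.ofReal_pow hc, one_div, ENNReal.pow_rpow_inv_natCast Module.finrank_pos.ne']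
  rw [← hroot d hd, ← hroot e he]
  constructor <;> gcongr

end Volume

/-! ### Nets of products of biforms -/

section BiformDim

/-- The dimension of the space of biforms of bidegree `(a, b)`, that is, the number of monomials
of that bidegree. -/
def biformDim (n m a b : ℕ) : ℕ := (n + a - 1).choose a * (m + b - 1).choose b

/-- The exponents of the monomials of bidegree `(a, b)`. -/
def biformExponents (n m a b : ℕ) : Finset (Fin n ⊕ Fin m →₀ ℕ) :=
  (Finset.univ.finsuppAntidiag a ×ˢ Finset.univ.finsuppAntidiag b).map
    Finsupp.sumFinsuppEquivProdFinsupp.symm.toEmbedding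

lemma card_biformExponents (n m a b : ℕ) : (biformExponents n m a b).card = biformDim n m a b := by
  rw [biformExponents, Finset.card_map, Finset.card_product,
    Finset.card_finsuppAntidiag_nat_eq_choose, Finset.card_finsuppAntidiag_nat_eq_choose,
    Finset.card_univ, Finset.card_univ, Fintype.card_fin, Fintype.card_fin, biformDim]

lemma weight_bw {n m : ℕ} (d : Fin n ⊕ Fin m →₀ ℕ) :
    Finsupp.weight (bw n m) d = (∑ i, d (Sum.inl i), ∑ j, d (Sum.inr j)) := by
  rw [Finsupp.weight_apply, Finsupp.sum_fintype _ _ fun i => zero_smul ℕ (bw n m i),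
    Fintype.sum_sum_type]
  ext <;> simp [bw, Prod.fst_sum, Prod.snd_sum]

lemma mem_biformExponents {n m a b : ℕ} {d : Fin n ⊕ Fin m →₀ ℕ}
    (hd : Finsupp.weight (bw n m) d = (a, b)) : d ∈ biformExponents n m a b := by
  rw [weight_bw, Prod.mk.injEq] at hd
  rw [biformExponents, Finset.mem_map_equiv, Equiv.symm_symm, Finset.mem_product,
    Finset.mem_finsuppAntidiag, Finset.mem_finsuppAntidiag]
  exact ⟨⟨hd.1, Finset.subset_univ _⟩, ⟨hd.2, Finset.subset_univ _⟩⟩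

lemma weightedHomogeneousSubmodule_le_restrictSupport (n m a b : ℕ) :
    weightedHomogeneousSubmodule ℝ (bw n m) (a, b) ≤
      restrictSupport ℝ (biformExponents n m a b : Set (Fin n ⊕ Fin m →₀ ℕ)) := fun _ hf =>
  (mem_restrictSupport_iff ℝ).mpr fun _ hd => mem_biformExponents (hf (mem_support_iff.mp hd))

instance finite_restrictSupport {ι : Type*} (s : Finset (ι →₀ ℕ)) :
    Module.Finite ℝ (restrictSupport ℝ (s : Set (ι →₀ ℕ))) :=
  Module.Finite.of_basis (basisRestrictSupport ℝ _)

lemma finite_weightedHomogeneousSubmodule_bw (n m a b : ℕ) :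
    Module.Finite ℝ (weightedHomogeneousSubmodule ℝ (bw n m) (a, b)) :=
  Submodule.finiteDimensional_of_le (weightedHomogeneousSubmodule_le_restrictSupport n m a b)

lemma finrank_weightedHomogeneousSubmodule_bw_le (n m a b : ℕ) :
    Module.finrank ℝ (weightedHomogeneousSubmodule ℝ (bw n m) (a, b)) ≤ biformDim n m a b := by
  refine (Submodule.finrank_mono
    (weightedHomogeneousSubmodule_le_restrictSupport n m a b)).trans_eq ?_
  rw [Module.finrank_eq_card_basis (basisRestrictSupport ℝ _), ← card_biformExponents]
  exact Fintype.card_coe _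

end BiformDim

section SquareNet

variable {n m : ℕ} {I : MvPolynomial (Fin n ⊕ Fin m) ℝ →ₗ[ℝ] ℝ} {a b : ℕ}

/-- The inner product `I (f * g)` on biforms of bidegree `(a, b)`. -/
abbrev IsBisphereAverage.innerCore (hI : IsBisphereAverage n m I) (a b : ℕ) :
    InnerProductSpace.Core ℝ (weightedHomogeneousSubmodule ℝ (bw n m) (a, b)) where
  inner f g := I (f.1 * g.1)
  conj_inner_symm f g := by rw [conj_trivial, mul_comm]
  re_inner_nonneg f := hI.mul_self_nonneg f.1
  add_left f g h := by rw [Submodule.coe_add, add_mul, map_add]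
  smul_left f g r := by
    rw [Submodule.coe_smul, smul_mul_assoc, map_smul, smul_eq_mul, conj_trivial]
  definite f hf := by
    by_contra h
    exact (hI.mul_self_pos f.2 fun h0 => h (Subtype.ext h0)).ne' hf

lemma IsBisphereAverage.exists_biform_net (hI : IsBisphereAverage n m I) (a b : ℕ) :
    ∃ Γ : Finset (MvPolynomial (Fin n ⊕ Fin m) ℝ), Γ.card ≤ 5 ^ biformDim n m a b ∧
      (∀ γ ∈ Γ, γ ∈ Biform n m a b ∧ I (γ * γ) ≤ 2 ^ 2) ∧
      ∀ g ∈ Biform n m a b, I (g * g) ≤ 1 → g ∈ convexHull ℝ (Γ : Set _) := by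
  classical
  let core := hI.innerCore a b
  let : NormedAddCommGroup (weightedHomogeneousSubmodule ℝ (bw n m) (a, b)) :=
    core.toNormedAddCommGroup
  let : InnerProductSpace ℝ (weightedHomogeneousSubmodule ℝ (bw n m) (a, b)) :=
    InnerProductSpace.ofCore core.toCore
  have := finite_weightedHomogeneousSubmodule_bw n m a b
  have hnorm : ∀ f : weightedHomogeneousSubmodule ℝ (bw n m) (a, b), ‖f‖ ^ 2 = I (f.1 * f.1) :=
    fun f => (real_inner_self_eq_norm_sq f).symm
  obtain ⟨Γ, hcard, hΓ, hball⟩ := exists_finset_closedBall_subset_convexHull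
    (weightedHomogeneousSubmodule ℝ (bw n m) (a, b))
  refine ⟨Γ.image Subtype.val, ?_, ?_, fun g hg hg1 => ?_⟩
  · exact Finset.card_image_le.trans (hcard.trans (Nat.pow_le_pow_right (by norm_num)
      (finrank_weightedHomogeneousSubmodule_bw_le n m a b)))
  · rw [Finset.forall_mem_image]
    refine fun γ hγ => ⟨γ.2, (hnorm γ).symm.trans_le ?_⟩
    gcongr
    exact hΓ γ hγ
  · rw [Finset.coe_image, ← Submodule.coe_subtype, ← LinearMap.image_convexHull]
    refine ⟨⟨g, hg⟩, hball (mem_closedBall_zero_iff.mpr ?_), rfl⟩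
    rwa [← sq_le_one_iff₀ (norm_nonneg _), hnorm]

/-- A finite set of products of two biforms of bidegree `(a, b)` and norm at most `2` whose convex
hull contains all squares of biforms of norm `1`. -/
structure IsSquareNet (I : MvPolynomial (Fin n ⊕ Fin m) ℝ →ₗ[ℝ] ℝ) (a b : ℕ)
    (Δ : Finset (MvPolynomial (Fin n ⊕ Fin m) ℝ)) : Prop where
  card_le : Δ.card ≤ 25 ^ biformDim n m a b
  exists_eq_mul : ∀ δ ∈ Δ, ∃ f ∈ Biform n m a b, ∃ g ∈ Biform n m a b,
    I (f * f) ≤ 2 ^ 2 ∧ I (g * g) ≤ 2 ^ 2 ∧ δ = f * g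
  mul_self_eq_smul : ∀ g ∈ Biform n m a b,
    ∃ h ∈ convexHull ℝ (Δ : Set (MvPolynomial (Fin n ⊕ Fin m) ℝ)), g * g = I (g * g) • h

open scoped Pointwise in
lemma IsBisphereAverage.exists_isSquareNet (hI : IsBisphereAverage n m I) (a b : ℕ) :
    ∃ Δ, IsSquareNet I a b Δ := by
  classical
  obtain ⟨Γ, hcard, hΓ, hhull⟩ := hI.exists_biform_net a b
  refine ⟨Γ * Γ, ?_, fun δ hδ => ?_, fun g hg => ?_⟩
  · calc (Γ * Γ).card ≤ 5 ^ biformDim n m a b * 5 ^ biformDim n m a b :=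
          Finset.card_mul_le.trans (Nat.mul_le_mul hcard hcard)
      _ = 25 ^ biformDim n m a b := (mul_pow 5 5 _).symm
  · obtain ⟨f, hf, g, hg, rfl⟩ := Finset.mem_mul.mp hδ
    exact ⟨f, (hΓ f hf).1, g, (hΓ g hg).1, (hΓ f hf).2, (hΓ g hg).2, rfl⟩
  · rw [Finset.coe_mul]
    rcases eq_or_ne g 0 with rfl | hg0
    · have h0 : (0 : MvPolynomial (Fin n ⊕ Fin m) ℝ) ∈ convexHull ℝ (Γ : Set _) :=
        hhull 0 hg (by rw [mul_zero, map_zero]; exact zero_le_one)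
      exact ⟨0 * 0, mul_mem_convexHull_mul h0 h0, by simp⟩
    have hpos := hI.mul_self_pos hg hg0
    have hsqrt : √(I (g * g)) * √(I (g * g)) = I (g * g) := Real.mul_self_sqrt hpos.le
    have hunit : (√(I (g * g)))⁻¹ • g ∈ convexHull ℝ (Γ : Set _) := by
      refine hhull _ (Submodule.smul_mem (weightedHomogeneousSubmodule ℝ _ _) _ hg) ?_
      rw [smul_mul_smul_comm, map_smul, smul_eq_mul, ← mul_inv, hsqrt, inv_mul_cancel₀ hpos.ne']
    refine ⟨_, mul_mem_convexHull_mul hunit hunit, ?_⟩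
    rw [smul_mul_smul_comm, ← mul_inv, hsqrt, smul_inv_smul₀ hpos.ne']

namespace IsSquareNet

variable {Δ : Finset (MvPolynomial (Fin n ⊕ Fin m) ℝ)}

lemma mem_convexHull (hΔ : IsSquareNet I a b Δ) (hI : IsBisphereAverage n m I)
    {f : MvPolynomial (Fin n ⊕ Fin m) ℝ} (hf : f ∈ SqSet n m a b) (hf1 : I f = 1) :
    f ∈ convexHull ℝ (Δ : Set (MvPolynomial (Fin n ⊕ Fin m) ℝ)) := by
  obtain ⟨N, g, hg, rfl⟩ := hf
  choose h hh hgh using fun i => hΔ.mul_self_eq_smul (g i) (hg i)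
  simp only [sq] at hf1 ⊢
  rw [Finset.sum_congr rfl fun i _ => hgh i]
  exact (convex_convexHull ℝ _).sum_mem (fun i _ => hI.mul_self_nonneg (g i))
    ((map_sum I _ _).symm.trans hf1) fun i _ => hh i

lemma le_apply_mul_self (hΔ : IsSquareNet I a b Δ) (hI : IsBisphereAverage n m I)
    {L : MvPolynomial (Fin n ⊕ Fin m) ℝ →ₗ[ℝ] ℝ} {c : ℝ} (hL : ∀ δ ∈ Δ, c ≤ L δ)
    {g : MvPolynomial (Fin n ⊕ Fin m) ℝ} (hg : g ∈ Biform n m a b) :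
    c * I (g * g) ≤ L (g * g) := by
  obtain ⟨h, hh, hgh⟩ := hΔ.mul_self_eq_smul g hg
  have hch : c ≤ L h := convexHull_min hL (convex_halfSpace_ge L.isLinear c) hh
  calc c * I (g * g) ≤ L h * I (g * g) := mul_le_mul_of_nonneg_right hch (hI.mul_self_nonneg g)
    _ = L (g * g) := by
        conv_rhs => rw [hgh, map_smul, smul_eq_mul, mul_comm]

end IsSquareNet

end SquareNet

/-! ### Volume bounds for the section of sums of squares -/

section SqSection

variable {n m : ℕ} {I : MvPolynomial (Fin n ⊕ Fin m) ℝ →ₗ[ℝ] ℝ} {a b : ℕ}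
  {Δ : Finset (MvPolynomial (Fin n ⊕ Fin m) ℝ)}
  {E : Type*} [NormedAddCommGroup E] [InnerProductSpace ℝ E]
  {ψ : E →ₗ[ℝ] MvPolynomial (Fin n ⊕ Fin m) ℝ}

/-- `ψ` embeds the Euclidean space `E` isometrically, for the inner product `I (f * g)`, into the
biforms of bidegree `(2 * a, 2 * b)` with average zero. -/
structure IsMeanZeroIsometry (I : MvPolynomial (Fin n ⊕ Fin m) ℝ →ₗ[ℝ] ℝ) (a b : ℕ)
    (ψ : E →ₗ[ℝ] MvPolynomial (Fin n ⊕ Fin m) ℝ) : Prop where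
  mem_biform : ∀ x, ψ x ∈ Biform n m (2 * a) (2 * b)
  apply_eq_zero : ∀ x, I (ψ x) = 0
  apply_mul : ∀ x y, I (ψ x * ψ y) = inner ℝ x y

/-- The section of the cone of sums of squares by the affine space `range ψ + qpoly n m a b`, in
the coordinates given by `ψ`. -/
def sqSection (a b : ℕ) (ψ : E →ₗ[ℝ] MvPolynomial (Fin n ⊕ Fin m) ℝ) : Set E :=
  {x | ψ x + qpoly n m a b ∈ SqSet n m a b}

lemma IsMeanZeroIsometry.apply_mul_self (hψ : IsMeanZeroIsometry I a b ψ) (x : E) :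
    I (ψ x * ψ x) = ‖x‖ ^ 2 :=
  (hψ.apply_mul x x).trans (real_inner_self_eq_norm_sq x)

/- By duality it is enough that `ψ x + qpoly` is apolarly nonnegative on squares, hence on a net of
them; on a square `g * g` the form `qpoly` contributes a multiple of `I (g * g)`. -/
lemma mem_sqSection_of_le_apolarForm (hI : IsBisphereAverage n m I)
    (hψ : IsMeanZeroIsometry I a b ψ) (hΔ : IsSquareNet I a b Δ) {x : E}
    (hx : ∀ δ ∈ Δ, -(2 ^ (a + b) * (a.factorial * b.factorial) *
      (gaussMoment n a * gaussMoment m b)) ≤ apolarForm δ (ψ x)) :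
    x ∈ sqSection a b ψ := by
  refine mem_sqSet_of_apolarForm_nonneg (Submodule.add_mem (weightedHomogeneousSubmodule ℝ _ _)
    (hψ.mem_biform x) (qpoly_mem_biform a b)) fun g hg => ?_
  have hnet := hΔ.le_apply_mul_self hI (L := apolarForm.flip (ψ x)) hx hg
  rw [LinearMap.flip_apply] at hnet
  rw [map_add, apolarForm_comm _ (qpoly n m a b), hI.apolarForm_qpoly (mul_mem_biform hg hg)]
  linarith

variable [FiniteDimensional ℝ E]

/-- The adjoint of `ψ` with respect to the inner product `I (f * g)`. -/
def averageAdjoint (I : MvPolynomial (Fin n ⊕ Fin m) ℝ →ₗ[ℝ] ℝ)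
    (ψ : E →ₗ[ℝ] MvPolynomial (Fin n ⊕ Fin m) ℝ) : MvPolynomial (Fin n ⊕ Fin m) ℝ →ₗ[ℝ] E :=
  rieszMap (((LinearMap.mul ℝ _).compr₂ I).compl₂ ψ)

/-- The adjoint of `ψ` with respect to the apolar inner product. -/
def apolarAdjoint (ψ : E →ₗ[ℝ] MvPolynomial (Fin n ⊕ Fin m) ℝ) :
    MvPolynomial (Fin n ⊕ Fin m) ℝ →ₗ[ℝ] E :=
  rieszMap (apolarForm.compl₂ ψ)

lemma inner_averageAdjoint (p : MvPolynomial (Fin n ⊕ Fin m) ℝ) (y : E) :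
    inner ℝ (averageAdjoint I ψ p) y = I (p * ψ y) :=
  inner_rieszMap _ p y

lemma inner_apolarAdjoint (p : MvPolynomial (Fin n ⊕ Fin m) ℝ) (y : E) :
    inner ℝ (apolarAdjoint ψ p) y = apolarForm p (ψ y) :=
  inner_rieszMap _ p y

lemma averageAdjoint_add_qpoly (hI : IsBisphereAverage n m I) (hψ : IsMeanZeroIsometry I a b ψ)
    (x : E) : averageAdjoint I ψ (ψ x + qpoly n m a b) = x := by
  refine ext_inner_right ℝ fun y => ?_
  rw [inner_averageAdjoint, add_mul, map_add, hψ.apply_mul, hI.apply_qpoly_mul, hψ.apply_eq_zero,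
    add_zero]

lemma sqSection_subset_convexHull [DecidableEq E] (hI : IsBisphereAverage n m I)
    (hψ : IsMeanZeroIsometry I a b ψ) (hΔ : IsSquareNet I a b Δ) :
    sqSection a b ψ ⊆ convexHull ℝ (Δ.image (averageAdjoint I ψ) : Set E) := by
  intro x hx
  have hq : I (qpoly n m a b) = 1 := by
    rw [← mul_one (qpoly n m a b), hI.apply_qpoly_mul, hI.one]
  have hone : I (ψ x + qpoly n m a b) = 1 := by
    rw [map_add, hψ.apply_eq_zero, hq, zero_add]
  rw [Finset.coe_image, ← LinearMap.image_convexHull, ← averageAdjoint_add_qpoly hI hψ x]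
  exact Set.mem_image_of_mem _ (hΔ.mem_convexHull hI hx hone)

lemma norm_averageAdjoint_le (hI : IsBisphereAverage n m I) (hn : 0 < n) (hm : 0 < m)
    (hψ : IsMeanZeroIsometry I a b ψ) (hΔ : IsSquareNet I a b Δ)
    {δ : MvPolynomial (Fin n ⊕ Fin m) ℝ} (hδ : δ ∈ Δ) :
    ‖averageAdjoint I ψ δ‖ ≤ 4 * 4 ^ (a + b) := by
  obtain ⟨f, hf, g, hg, hf1, hg1, rfl⟩ := hΔ.exists_eq_mul δ hδ
  refine norm_rieszMap_le (by positivity) fun y => ?_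
  calc I (f * g * ψ y) ^ 2 ≤ I (f * g * (f * g)) * I (ψ y * ψ y) :=
        apply_mul_sq_le hI.mul_self_nonneg _ _
    _ ≤ (4 ^ (a + b)) ^ 2 * (2 ^ 2 * 2 ^ 2) * ‖y‖ ^ 2 := by
        rw [hψ.apply_mul_self]
        gcongr
        refine (hI.mul_sq_le hn hm hf hg).trans ?_
        gcongr
        exact hI.mul_self_nonneg g
    _ = (4 * 4 ^ (a + b)) ^ 2 * ‖y‖ ^ 2 := by ring

lemma norm_apolarAdjoint_le (hI : IsBisphereAverage n m I) (hn : 0 < n) (hm : 0 < m)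
    (hψ : IsMeanZeroIsometry I a b ψ) (hΔ : IsSquareNet I a b Δ)
    {δ : MvPolynomial (Fin n ⊕ Fin m) ℝ} (hδ : δ ∈ Δ) :
    ‖apolarAdjoint ψ δ‖ ≤ 4 * (2 ^ (a + b) * (gaussMoment n a * gaussMoment m b) *
      √(gaussMoment n (2 * a) * gaussMoment m (2 * b))) := by
  obtain ⟨f, hf, g, hg, hf1, hg1, rfl⟩ := hΔ.exists_eq_mul δ hδ
  have hg₁ := mul_pos (gaussMoment_pos hn a) (gaussMoment_pos hm b)
  have hg₂ := mul_pos (gaussMoment_pos hn (2 * a)) (gaussMoment_pos hm (2 * b))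
  refine norm_rieszMap_le (by positivity) fun y => ?_
  calc apolarForm (f * g) (ψ y) ^ 2
      ≤ (2 ^ (a + b) * (gaussMoment n a * gaussMoment m b)) ^ 2 * (I (f * f) * I (g * g)) *
          (gaussMoment n (2 * a) * gaussMoment m (2 * b) * I (ψ y * ψ y)) :=
        hI.apolarForm_mul_sq_le hf hg (hψ.mem_biform y)
    _ ≤ (2 ^ (a + b) * (gaussMoment n a * gaussMoment m b)) ^ 2 * (2 ^ 2 * 2 ^ 2) *
          (gaussMoment n (2 * a) * gaussMoment m (2 * b) * ‖y‖ ^ 2) := by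
        rw [hψ.apply_mul_self]
        gcongr
        exact hI.mul_self_nonneg g
    _ = _ := by
        rw [mul_pow 4, mul_pow _ √_, Real.sq_sqrt hg₂.le]
        ring

open Metric

variable [MeasurableSpace E] [BorelSpace E] (μ : Measure E) [μ.IsAddHaarMeasure]

lemma measure_sqSection_le (hI : IsBisphereAverage n m I) (hn : 0 < n) (hm : 0 < m)
    (hψ : IsMeanZeroIsometry I a b ψ) {s : ℕ} (hs : 0 < s)
    (hsE : 2 * biformDim n m a b * s ≤ Module.finrank ℝ E) :
    μ (sqSection a b ψ) ≤ μ (closedBall 0 (5 * (4 * 4 ^ (a + b) / √s))) := by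
  classical
  obtain ⟨Δ, hΔ⟩ := hI.exists_isSquareNet a b
  set W := Δ.image (averageAdjoint I ψ)
  have hcard : W.card ^ s ≤ 5 ^ Module.finrank ℝ E :=
    calc W.card ^ s ≤ (25 ^ biformDim n m a b) ^ s := by
          gcongr
          exact Finset.card_image_le.trans hΔ.card_le
      _ = 5 ^ (2 * biformDim n m a b * s) := by rw [pow_mul, pow_mul]; norm_num
      _ ≤ 5 ^ Module.finrank ℝ E := Nat.pow_le_pow_right (by norm_num) hsE
  have hnorm : ∀ w ∈ W, ‖w‖ ≤ 4 * 4 ^ (a + b) :=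
    Finset.forall_mem_image.mpr fun δ hδ => norm_averageAdjoint_le hI hn hm hψ hΔ hδ
  calc μ (sqSection a b ψ) ≤ W.card ^ s * μ (closedBall 0 (4 * 4 ^ (a + b) / √s)) :=
        (measure_mono (sqSection_subset_convexHull hI hψ hΔ)).trans
          (measure_convexHull_finset_le μ hnorm hs)
    _ ≤ (5 ^ Module.finrank ℝ E : ℕ) * μ (closedBall 0 (4 * 4 ^ (a + b) / √s)) := by
        gcongr
        exact_mod_cast hcard
    _ = μ (closedBall 0 (5 * (4 * 4 ^ (a + b) / √s))) := by
        rw [Measure.addHaar_closedBall_mul_of_pos μ _ (by norm_num : (0 : ℝ) < 5),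
          ← ENNReal.ofReal_natCast]
        norm_num

lemma pow_mul_exp_pow_le_half {P D : ℕ} (hP : 0 < P) {τ : ℝ} (h : 8 * P ≤ τ ^ 2 * D) :
    25 ^ P * Real.exp (-(τ ^ 2 / 2)) ^ D ≤ 1 / 2 := by
  have hexp : Real.exp (-(τ ^ 2 / 2)) ^ D ≤ Real.exp (-4) ^ P := by
    rw [← Real.exp_nat_mul, ← Real.exp_nat_mul, Real.exp_le_exp]
    linarith
  have hfifty : (50 : ℝ) ≤ Real.exp 4 :=
    calc (50 : ℝ) ≤ 2.7 ^ 4 := by norm_num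
      _ ≤ Real.exp 1 ^ 4 := by
          gcongr
          linarith [Real.exp_one_gt_d9]
      _ = Real.exp 4 := by rw [← Real.exp_nat_mul]; norm_num
  have hhalf : 25 * Real.exp (-4) ≤ 1 / 2 := by
    rw [Real.exp_neg, ← div_eq_mul_inv, div_le_iff₀ (Real.exp_pos _)]
    linarith
  calc 25 ^ P * Real.exp (-(τ ^ 2 / 2)) ^ D ≤ 25 ^ P * Real.exp (-4) ^ P := by gcongr
    _ = (25 * Real.exp (-4)) ^ P := (mul_pow _ _ _).symm
    _ ≤ (1 / 2) ^ P := by gcongr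
    _ ≤ 1 / 2 := pow_le_of_le_one (by norm_num) (by norm_num) hP.ne'

lemma le_measure_sqSection [Nontrivial E] (hI : IsBisphereAverage n m I) (hn : 0 < n) (hm : 0 < m)
    (hψ : IsMeanZeroIsometry I a b ψ) (hP : 0 < biformDim n m a b) {τ : ℝ} (hτ : 0 < τ)
    (hPτ : 8 * (biformDim n m a b : ℝ) ≤ τ ^ 2 * Module.finrank ℝ E) :
    μ (closedBall 0 (a.factorial * b.factorial /
        (4 * τ * √(gaussMoment n (2 * a) * gaussMoment m (2 * b))) / 2)) ≤
      μ (sqSection a b ψ) := by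
  classical
  obtain ⟨Δ, hΔ⟩ := hI.exists_isSquareNet a b
  have hg₁ := mul_pos (gaussMoment_pos hn a) (gaussMoment_pos hm b)
  have hg₂ := mul_pos (gaussMoment_pos hn (2 * a)) (gaussMoment_pos hm (2 * b))
  set g₁ := gaussMoment n a * gaussMoment m b with hg₁_def
  set g₂ := gaussMoment n (2 * a) * gaussMoment m (2 * b)
  set U := Δ.image (-apolarAdjoint ψ)
  have hcard : (U.card : ℝ) ≤ 25 ^ biformDim n m a b := by
    exact_mod_cast Finset.card_image_le.trans hΔ.card_le
  have hnorm : ∀ u ∈ U, ‖u‖ ≤ 4 * (2 ^ (a + b) * g₁ * √g₂) :=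
    Finset.forall_mem_image.mpr fun δ hδ =>
      (norm_neg _).trans_le (norm_apolarAdjoint_le hI hn hm hψ hΔ hδ)
  refine (measure_closedBall_half_le_of_halfspaces μ (by positivity) (by positivity) hτ.le hnorm
    ((mul_le_mul_of_nonneg_right hcard (by positivity)).trans
      (pow_mul_exp_pow_le_half hP hPτ))).trans (measure_mono fun x hx => ?_)
  refine mem_sqSection_of_le_apolarForm hI hψ hΔ fun δ hδ => ?_
  have hδx := hx _ (Finset.mem_image_of_mem _ hδ)
  rw [LinearMap.neg_apply, inner_neg_left, inner_apolarAdjoint] at hδx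
  rw [neg_le]
  refine hδx.trans_eq ?_
  rw [← hg₁_def]
  field_simp

end SqSection

section VolumeRatio

lemma exists_sample_size {P D : ℕ} (hP : 0 < P) (hPD : 2 * P ≤ D) {Q : ℝ} (hPQ : P ≤ D * Q) :
    ∃ s : ℕ, 0 < s ∧ 2 * P * s ≤ D ∧ 1 / √s ≤ 2 * √Q := by
  refine ⟨D / (2 * P), Nat.div_pos hPD (by omega), Nat.mul_div_le D (2 * P), ?_⟩
  set s := D / (2 * P)
  have hs : 0 < s := Nat.div_pos hPD (by omega)
  have hs' : (0 : ℝ) < s := Nat.cast_pos.mpr hs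
  have hD : 0 < (D : ℝ) := Nat.cast_pos.mpr (by omega)
  have hDs : (D : ℝ) ≤ 4 * P * s := by
    have hlt : D < 2 * P * (s + 1) := Nat.lt_mul_div_succ D (by omega)
    exact_mod_cast (by nlinarith : D ≤ 4 * P * s)
  have hQs : 1 ≤ 2 ^ 2 * Q * s := by
    refine le_of_mul_le_mul_left ?_ hD
    calc (D : ℝ) * 1 ≤ 4 * s * P := by linarith
      _ ≤ 4 * s * (D * Q) := by gcongr
      _ = D * (2 ^ 2 * Q * s) := by ring
  rw [div_le_iff₀ (Real.sqrt_pos.mpr hs')]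
  calc (1 : ℝ) ≤ √(2 ^ 2 * Q * s) := Real.one_le_sqrt.mpr hQs
    _ = 2 * √Q * √s := by
        rw [Real.sqrt_mul' _ hs'.le, Real.sqrt_mul (by positivity), Real.sqrt_sq (by norm_num)]

lemma sqrt_gaussMoment_mul_le {n m : ℕ} (hm : 0 < m) (a b : ℕ) :
    √(gaussMoment n (2 * a) * gaussMoment m (2 * b)) ≤
      2 ^ (a + b) * (((n : ℝ) / 2 + 2 * a) ^ a * ((m : ℝ) / 2 + 2 * b) ^ b) := by
  refine Real.sqrt_le_iff.mpr ⟨by positivity, ?_⟩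
  calc gaussMoment n (2 * a) * gaussMoment m (2 * b)
      ≤ ((n : ℝ) + 2 * (2 * a : ℕ)) ^ (2 * a) * ((m : ℝ) + 2 * (2 * b : ℕ)) ^ (2 * b) :=
        mul_le_mul (gaussMoment_le _ _) (gaussMoment_le _ _) (gaussMoment_pos hm _).le
          (by positivity)
    _ = (2 * ((n : ℝ) / 2 + 2 * a)) ^ (2 * a) * (2 * ((m : ℝ) / 2 + 2 * b)) ^ (2 * b) := by
        push_cast
        congr 2 <;> ring
    _ = _ := by
        rw [mul_pow, mul_pow]
        ring

lemma mul_le_two_mul_sqrt_six_mul_four_pow {a b : ℕ} (ha : 0 < a) (hb : 0 < b) {c : ℝ}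
    (hc : c ≤ 64) : c * 4 ^ (a + b) ≤ 2 * √6 * 4 ^ (2 * a + 2 * b) := by
  have hsqrt : (2 : ℝ) ≤ √6 := Real.le_sqrt_of_sq_le (by norm_num)
  have hpow : (4 : ℝ) ^ 2 ≤ 4 ^ (a + b) := pow_le_pow_right₀ (by norm_num) (by omega)
  calc c * 4 ^ (a + b) ≤ 2 * 2 * 4 ^ 2 * 4 ^ (a + b) := by gcongr; linarith
    _ ≤ 2 * √6 * 4 ^ (a + b) * 4 ^ (a + b) := by gcongr
    _ = 2 * √6 * 4 ^ (2 * a + 2 * b) := by ring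

open Metric

variable {n m : ℕ} {I : MvPolynomial (Fin n ⊕ Fin m) ℝ →ₗ[ℝ] ℝ} {a b : ℕ}
  {E : Type*} [NormedAddCommGroup E] [InnerProductSpace ℝ E] [FiniteDimensional ℝ E]
  {ψ : E →ₗ[ℝ] MvPolynomial (Fin n ⊕ Fin m) ℝ}
  [MeasurableSpace E] [BorelSpace E] (μ : Measure E) [μ.IsAddHaarMeasure]

lemma biformDim_pos (hn : 0 < n) (hm : 0 < m) (a b : ℕ) : 0 < biformDim n m a b :=
  Nat.mul_pos (Nat.choose_pos (by omega)) (Nat.choose_pos (by omega))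

lemma measure_sqSection_le_of_biformDim_le (hI : IsBisphereAverage n m I) (hn : 0 < n) (hm : 0 < m)
    (ha : 0 < a) (hb : 0 < b) (hψ : IsMeanZeroIsometry I a b ψ)
    (hPE : 2 * biformDim n m a b ≤ Module.finrank ℝ E) {Q : ℝ}
    (hPQ : biformDim n m a b ≤ Module.finrank ℝ E * Q) :
    μ (sqSection a b ψ) ≤ μ (closedBall 0 (2 * √6 * 4 ^ (2 * a + 2 * b) * √Q)) := by
  obtain ⟨s, hs, hsE, hsQ⟩ := exists_sample_size (biformDim_pos hn hm a b) hPE hPQ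
  refine (measure_sqSection_le μ hI hn hm hψ hs hsE).trans
    (measure_mono (closedBall_subset_closedBall ?_))
  calc 5 * (4 * 4 ^ (a + b) / √s) = 20 * 4 ^ (a + b) * (1 / √s) := by ring
    _ ≤ 20 * 4 ^ (a + b) * (2 * √Q) := by gcongr
    _ = 40 * 4 ^ (a + b) * √Q := by ring
    _ ≤ 2 * √6 * 4 ^ (2 * a + 2 * b) * √Q := by
        gcongr ?_ * _
        exact mul_le_two_mul_sqrt_six_mul_four_pow ha hb (by norm_num)

lemma le_measure_sqSection_of_biformDim_le [Nontrivial E] (hI : IsBisphereAverage n m I)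
    (hn : 0 < n) (hm : 0 < m) (ha : 0 < a) (hb : 0 < b) (hψ : IsMeanZeroIsometry I a b ψ)
    {Q : ℝ} (hQ : 0 < Q) (hPQ : biformDim n m a b ≤ Module.finrank ℝ E * Q) :
    μ (closedBall 0 (a.factorial * b.factorial / (2 * √6 * 4 ^ (2 * a + 2 * b) * √Q *
        (((n : ℝ) / 2 + 2 * a) ^ a * ((m : ℝ) / 2 + 2 * b) ^ b)))) ≤ μ (sqSection a b ψ) := by
  have hτ : 8 * (biformDim n m a b : ℝ) ≤ √(8 * Q) ^ 2 * Module.finrank ℝ E := by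
    rw [Real.sq_sqrt (by positivity)]
    linarith
  refine le_trans (measure_mono (closedBall_subset_closedBall ?_))
    (le_measure_sqSection μ hI hn hm hψ (biformDim_pos hn hm a b) (by positivity) hτ)
  have hg := mul_pos (gaussMoment_pos hn (2 * a)) (gaussMoment_pos hm (2 * b))
  set A : ℝ := ((n : ℝ) / 2 + 2 * a) ^ a * ((m : ℝ) / 2 + 2 * b) ^ b
  have hsqrt : √(8 * Q) ≤ 3 * √Q := by
    rw [Real.sqrt_mul (by norm_num)]
    gcongr
    exact Real.sqrt_le_iff.mpr (by norm_num)
  have hbound : 4 * √(8 * Q) * √(gaussMoment n (2 * a) * gaussMoment m (2 * b)) * 2 ≤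
      2 * √6 * 4 ^ (2 * a + 2 * b) * √Q * A :=
    calc 4 * √(8 * Q) * √(gaussMoment n (2 * a) * gaussMoment m (2 * b)) * 2
        ≤ 4 * (3 * √Q) * (2 ^ (a + b) * A) * 2 := by
          gcongr
          exact sqrt_gaussMoment_mul_le hm a b
      _ = 24 * 2 ^ (a + b) * (√Q * A) := by ring
      _ ≤ 24 * 4 ^ (a + b) * (√Q * A) := by gcongr; norm_num
      _ ≤ 2 * √6 * 4 ^ (2 * a + 2 * b) * (√Q * A) := by
          gcongr ?_ * _
          exact mul_le_two_mul_sqrt_six_mul_four_pow ha hb (by norm_num)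
      _ = 2 * √6 * 4 ^ (2 * a + 2 * b) * √Q * A := by ring
  rw [div_div]
  gcongr

end VolumeRatio

/-! ### Dimension estimates and constants -/

section Dimensions

lemma factorial_two_mul_mul_choose (n a : ℕ) :
    (2 * a).factorial * (n + 2 * a - 1).choose (2 * a) =
      a.factorial * (n + a - 1).choose a * (n + a).ascFactorial a := by
  rw [← Nat.ascFactorial_eq_factorial_mul_choose', ← Nat.ascFactorial_eq_factorial_mul_choose',
    two_mul, Nat.ascFactorial_mul_ascFactorial]

lemma two_mul_add_one_mul_choose_le {n : ℕ} (hn : 2 ≤ n) (a : ℕ) :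
    (2 * a + 1) * (n + a - 1).choose a ≤ (a + 1) * (n + 2 * a - 1).choose (2 * a) := by
  have hfact : (2 * a).factorial = a.factorial * (a + 1).ascFactorial a := by
    rw [Nat.factorial_mul_ascFactorial, two_mul]
  refine Nat.le_of_mul_le_mul_left ?_ (Nat.factorial_pos (2 * a))
  calc (2 * a).factorial * ((2 * a + 1) * (n + a - 1).choose a)
      = a.factorial * (n + a - 1).choose a * ((a + 1 + a) * (a + 1).ascFactorial a) := by
        rw [hfact]
        ring
    _ = a.factorial * (n + a - 1).choose a * ((a + 1) * (a + 2).ascFactorial a) := by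
        rw [← Nat.succ_ascFactorial]
    _ ≤ a.factorial * (n + a - 1).choose a * ((a + 1) * (n + a).ascFactorial a) := by
        gcongr _ * (_ * ?_)
        exact Nat.ascFactorial_le _ (by omega)
    _ = (a + 1) * ((2 * a).factorial * (n + 2 * a - 1).choose (2 * a)) := by
        rw [factorial_two_mul_mul_choose]
        ring
    _ = (2 * a).factorial * ((a + 1) * (n + 2 * a - 1).choose (2 * a)) := by ring

lemma three_mul_choose_le {n a : ℕ} (hn : 2 ≤ n) (ha : 0 < a) :
    3 * (n + a - 1).choose a ≤ 2 * (n + 2 * a - 1).choose (2 * a) := by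
  refine Nat.le_of_mul_le_mul_left ?_ a.succ_pos
  calc (a + 1) * (3 * (n + a - 1).choose a) = 3 * (a + 1) * (n + a - 1).choose a := by ring
    _ ≤ 2 * (2 * a + 1) * (n + a - 1).choose a := by gcongr ?_ * _; omega
    _ = 2 * ((2 * a + 1) * (n + a - 1).choose a) := by ring
    _ ≤ 2 * ((a + 1) * (n + 2 * a - 1).choose (2 * a)) := by
        gcongr 2 * ?_
        exact two_mul_add_one_mul_choose_le hn a
    _ = (a + 1) * (2 * (n + 2 * a - 1).choose (2 * a)) := by ring

lemma le_choose_add_sub_one (n : ℕ) {a : ℕ} (ha : 0 < a) : n ≤ (n + a - 1).choose a := by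
  cases n with
  | zero => exact Nat.zero_le _
  | succ n =>
    calc n + 1 = (n + 1).choose n := (Nat.choose_succ_self_right n).symm
      _ ≤ (n + a).choose n := Nat.choose_le_choose n (by omega)
      _ = (n + 1 + a - 1).choose a := by rw [Nat.choose_symm_add]; congr 1; omega

lemma factorial_mul_choose_mul_succ_pow_le (n : ℕ) {a : ℕ} (ha : 0 < a) :
    a.factorial * (n + a - 1).choose a * (n + 1) ^ a ≤
      (2 * a).factorial * (n + 2 * a - 1).choose (2 * a) := by
  rw [factorial_two_mul_mul_choose]
  gcongr
  calc (n + 1) ^ a ≤ (n + a) ^ a := by gcongr; omega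
    _ ≤ (n + a).ascFactorial a := Nat.pow_succ_le_ascFactorial _ _

variable {n m a b : ℕ}

lemma mul_le_biformDim (n m : ℕ) (ha : 0 < a) (hb : 0 < b) : n * m ≤ biformDim n m a b :=
  Nat.mul_le_mul (le_choose_add_sub_one n ha) (le_choose_add_sub_one m hb)

lemma two_mul_biformDim_lt (hn : 2 ≤ n) (hm : 2 ≤ m) (ha : 0 < a) (hb : 0 < b) :
    2 * biformDim n m a b < biformDim n m (2 * a) (2 * b) := by
  have hprod := Nat.mul_le_mul (three_mul_choose_le hn ha) (three_mul_choose_le hm hb)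
  have hpos : 2 * 2 ≤ biformDim n m a b :=
    (Nat.mul_le_mul hn hm).trans (mul_le_biformDim n m ha hb)
  unfold biformDim at *
  linarith

lemma biformDim_mul_factorial_le (hn : 2 ≤ n) (hm : 2 ≤ m) (ha : 0 < a) (hb : 0 < b) :
    biformDim n m a b * (a.factorial * b.factorial * (n ^ a * m ^ b)) ≤
      (biformDim n m (2 * a) (2 * b) - 1) * ((2 * a).factorial * (2 * b).factorial) := by
  obtain ⟨D, hD⟩ : ∃ D, biformDim n m (2 * a) (2 * b) = D + 1 :=
    ⟨_, (Nat.sub_add_cancel (biformDim_pos (by omega) (by omega) _ _)).symm⟩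
  have hnD : n ≤ D := by
    have hlt := two_mul_biformDim_lt hn hm ha hb
    have hle := mul_le_biformDim n m ha hb
    nlinarith
  have hpow : n ^ a * (n + 1) ≤ n * (n + 1) ^ a := by
    obtain ⟨c, rfl⟩ := Nat.exists_eq_succ_of_ne_zero ha.ne'
    calc n ^ (c + 1) * (n + 1) = n * n ^ c * (n + 1) := by ring
      _ ≤ n * (n + 1) ^ c * (n + 1) := by gcongr; omega
      _ = n * (n + 1) ^ (c + 1) := by ring
  rw [hD, Nat.add_sub_cancel]
  refine Nat.le_of_mul_le_mul_left ?_ n.succ_pos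
  calc (n + 1) * (biformDim n m a b * (a.factorial * b.factorial * (n ^ a * m ^ b)))
      = biformDim n m a b * (a.factorial * b.factorial) * (n ^ a * (n + 1) * m ^ b) := by ring
    _ ≤ biformDim n m a b * (a.factorial * b.factorial) * (n * (n + 1) ^ a * (m + 1) ^ b) := by
        gcongr
        omega
    _ = n * (a.factorial * (n + a - 1).choose a * (n + 1) ^ a *
          (b.factorial * (m + b - 1).choose b * (m + 1) ^ b)) := by
        rw [biformDim]
        ring
    _ ≤ n * ((2 * a).factorial * (n + 2 * a - 1).choose (2 * a) *
          ((2 * b).factorial * (m + 2 * b - 1).choose (2 * b))) := by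
        gcongr n * (?_ * ?_)
        · exact factorial_mul_choose_mul_succ_pow_le n ha
        · exact factorial_mul_choose_mul_succ_pow_le m hb
    _ = n * (D + 1) * ((2 * a).factorial * (2 * b).factorial) := by
        rw [← hD, biformDim]
        ring
    _ ≤ (n + 1) * D * ((2 * a).factorial * (2 * b).factorial) := by
        gcongr ?_ * _
        linarith
    _ = (n + 1) * (D * ((2 * a).factorial * (2 * b).factorial)) := by ring

lemma biformDim_one_one (n m : ℕ) : biformDim n m 1 1 = n * m := by
  simp [biformDim]

lemma four_mul_biformDim_two_two (n m : ℕ) :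
    4 * biformDim n m 2 2 = n * (n + 1) * (m * (m + 1)) := by
  have htwo : ∀ k : ℕ, 2 * (k + 2 - 1).choose 2 = k * (k + 1) := fun k => by
    rw [show k + 2 - 1 = k + 1 by omega, Nat.choose_two_right, Nat.add_sub_cancel, mul_comm (k + 1),
      Nat.mul_div_cancel' (Nat.even_mul_succ_self k).two_dvd]
  rw [← htwo, ← htwo, biformDim]
  ring

lemma mul_mul_add_add_le (hn : 2 ≤ n) (hm : 2 ≤ m) :
    n * m * (n * m + n + m) ≤ (biformDim n m 2 2 - 1) * 4 := by
  have hdim := four_mul_biformDim_two_two n m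
  have hnm := Nat.mul_le_mul hn hm
  have hsplit : n * (n + 1) * (m * (m + 1)) = n * m * (n * m + n + m) + n * m := by ring
  omega

end Dimensions

section Constants

variable {n m a b : ℕ}

lemma biformDim_le_mul_of_one_one (hn : 2 ≤ n) (hm : 2 ≤ m) :
    (biformDim n m 1 1 : ℝ) ≤
      (biformDim n m (2 * 1) (2 * 1) - 1 : ℕ) * (4 / ((n : ℝ) * m + n + m)) := by
  rw [biformDim_one_one, ← mul_div_assoc, le_div_iff₀ (by positivity)]
  exact_mod_cast mul_mul_add_add_le hn hm

lemma biformDim_le_mul (hn : 2 ≤ n) (hm : 2 ≤ m) (ha : 0 < a) (hb : 0 < b) :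
    (biformDim n m a b : ℝ) ≤ (biformDim n m (2 * a) (2 * b) - 1 : ℕ) *
      ((2 * a).factorial * (2 * b).factorial / (a.factorial * b.factorial) /
        ((n : ℝ) ^ a * (m : ℝ) ^ b)) := by
  rw [div_div, ← mul_div_assoc, le_div_iff₀ (by positivity)]
  exact_mod_cast biformDim_mul_factorial_le hn hm ha hb

lemma rpow_natCast_div_two {x : ℝ} (hx : 0 ≤ x) (k : ℕ) : x ^ ((k : ℝ) / 2) = √(x ^ k) := by
  rw [Real.sqrt_eq_rpow, ← Real.rpow_natCast, ← Real.rpow_mul hx, mul_one_div]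

lemma rpow_three_halves {x : ℝ} (hx : 0 < x) : x ^ ((3 : ℝ) / 2) = x * √x := by
  rw [show (3 : ℝ) / 2 = 1 + 1 / 2 by norm_num, Real.rpow_add hx, Real.rpow_one,
    Real.sqrt_eq_rpow]

lemma sqrt_four_div (x : ℝ) : √(4 / x) = 2 / √x := by
  rw [Real.sqrt_div (by norm_num), show (4 : ℝ) = 2 ^ 2 by norm_num, Real.sqrt_sq (by norm_num)]

lemma lower_constant_one_one (n m : ℕ) :
    (2 : ℝ) ^ (-(8 : ℝ)) * (6 : ℝ) ^ (-(1 : ℝ) / 2) * √((n : ℝ) * m + n + m) /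
        (((n : ℝ) + 4) * ((m : ℝ) + 4)) =
      (Nat.factorial 1 : ℝ) * (Nat.factorial 1 : ℝ) / (2 * √6 * 4 ^ (2 * 1 + 2 * 1) *
        √(4 / ((n : ℝ) * m + n + m)) *
        (((n : ℝ) / 2 + 2 * (1 : ℕ)) ^ 1 * ((m : ℝ) / 2 + 2 * (1 : ℕ)) ^ 1)) := by
  rw [sqrt_four_div, neg_div, Real.rpow_neg (by norm_num), Real.rpow_neg (by norm_num),
    ← Real.sqrt_eq_rpow]
  simp only [Real.rpow_ofNat, Nat.factorial_one, Nat.cast_one, pow_one]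
  field_simp
  ring

lemma upper_constant_one_one (n m : ℕ) :
    (2 : ℝ) ^ (10 : ℕ) * √6 / √((n : ℝ) * m + n + m) =
      2 * √6 * 4 ^ (2 * 1 + 2 * 1) * √(4 / ((n : ℝ) * m + n + m)) := by
  rw [sqrt_four_div]
  ring

lemma lower_constant (n m a b : ℕ) :
    ((a.factorial : ℝ) * (b.factorial : ℝ)) ^ ((3 : ℝ) / 2) /
        (2 * √6 * (4 : ℝ) ^ (2 * a + 2 * b) *
          √(((2 * a).factorial : ℝ) * ((2 * b).factorial : ℝ))) *
      ((n : ℝ) ^ ((a : ℝ) / 2) * (m : ℝ) ^ ((b : ℝ) / 2) /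
        (((n : ℝ) / 2 + 2 * (a : ℝ)) ^ a * ((m : ℝ) / 2 + 2 * (b : ℝ)) ^ b)) =
    a.factorial * b.factorial / (2 * √6 * 4 ^ (2 * a + 2 * b) *
      √((2 * a).factorial * (2 * b).factorial / (a.factorial * b.factorial) /
        ((n : ℝ) ^ a * (m : ℝ) ^ b)) *
      (((n : ℝ) / 2 + 2 * a) ^ a * ((m : ℝ) / 2 + 2 * b) ^ b)) := by
  rw [rpow_three_halves (by positivity), rpow_natCast_div_two n.cast_nonneg,
    rpow_natCast_div_two m.cast_nonneg, Real.sqrt_div (by positivity),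
    Real.sqrt_div (by positivity), Real.sqrt_mul (by positivity : (0 : ℝ) ≤ (n : ℝ) ^ a)]
  field_simp

lemma upper_constant (n m a b : ℕ) :
    2 * √6 * (4 : ℝ) ^ (2 * a + 2 * b) *
        √(((2 * a).factorial : ℝ) * ((2 * b).factorial : ℝ) /
          ((a.factorial : ℝ) * (b.factorial : ℝ))) *
      ((n : ℝ) ^ (-(a : ℝ) / 2) * (m : ℝ) ^ (-(b : ℝ) / 2)) =
    2 * √6 * 4 ^ (2 * a + 2 * b) *
      √((2 * a).factorial * (2 * b).factorial / (a.factorial * b.factorial) /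
        ((n : ℝ) ^ a * (m : ℝ) ^ b)) := by
  rw [neg_div, neg_div, Real.rpow_neg n.cast_nonneg, Real.rpow_neg m.cast_nonneg,
    rpow_natCast_div_two n.cast_nonneg, rpow_natCast_div_two m.cast_nonneg,
    Real.sqrt_div (by positivity : (0 : ℝ) ≤ (2 * a).factorial * (2 * b).factorial / _) (_ * _),
    Real.sqrt_mul (by positivity : (0 : ℝ) ≤ (n : ℝ) ^ a)]
  field_simp

end Constants

section UnitaryParam

variable {n m a b D : ℕ} {σ₁ : Measure (Fin n → ℝ)} {σ₂ : Measure (Fin m → ℝ)}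
  {ψ : (Fin D → ℝ) →ₗ[ℝ] MvPolynomial (Fin n ⊕ Fin m) ℝ}

/-- `ψ` read on the Euclidean space `EuclideanSpace ℝ (Fin D)`. -/
def euclideanParam (ψ : (Fin D → ℝ) →ₗ[ℝ] MvPolynomial (Fin n ⊕ Fin m) ℝ) :
    EuclideanSpace ℝ (Fin D) →ₗ[ℝ] MvPolynomial (Fin n ⊕ Fin m) ℝ :=
  ψ ∘ₗ (WithLp.linearEquiv 2 ℝ (Fin D → ℝ)).toLinearMap

lemma volume_preimage_ofLp (S : Set (Fin D → ℝ)) :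
    volume ((WithLp.ofLp : EuclideanSpace ℝ (Fin D) → Fin D → ℝ) ⁻¹' S) = volume S :=
  (EuclideanSpace.volume_preserving_symm_measurableEquiv_toLp (Fin D)).measure_preimage_equiv S

lemma IsUnitaryParam.mem_MSet (hψ : IsUnitaryParam n m D σ₁ σ₂ (MSet n m a b σ₁ σ₂) ψ)
    (x : Fin D → ℝ) : ψ x ∈ MSet n m a b σ₁ σ₂ :=
  hψ.range ▸ Set.mem_range_self x

lemma IsUnitaryParam.isMeanZeroIsometry
    (hψ : IsUnitaryParam n m D σ₁ σ₂ (MSet n m a b σ₁ σ₂) ψ)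
    (hσ₁ : IsSphereMeasure n σ₁) (hσ₂ : IsSphereMeasure m σ₂) :
    IsMeanZeroIsometry (sphereAverage hσ₁ hσ₂) a b (euclideanParam ψ) where
  mem_biform x := (hψ.mem_MSet x.ofLp).1
  apply_eq_zero x := (bavg_eq_sphereAverage hσ₁ hσ₂ _).symm.trans (hψ.mem_MSet x.ofLp).2
  apply_mul x y := by
    rw [← bip_eq_sphereAverage, PiLp.inner_apply]
    refine (hψ.ip x.ofLp y.ofLp).trans (Finset.sum_congr rfl fun i _ => ?_)
    exact mul_comm _ _

lemma IsUnitaryParam.volume_preimage_tilde_sqSet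
    (hψ : IsUnitaryParam n m D σ₁ σ₂ (MSet n m a b σ₁ σ₂) ψ) :
    volume (ψ ⁻¹' tilde n m a b σ₁ σ₂ (SqSet n m a b)) =
      volume (sqSection a b (euclideanParam ψ)) := by
  rw [← volume_preimage_ofLp]
  exact congrArg _ (Set.ext fun x => and_iff_right (hψ.mem_MSet x.ofLp))

lemma IsUnitaryParam.volume_preimage_bball
    (hψ : IsUnitaryParam n m D σ₁ σ₂ (MSet n m a b σ₁ σ₂) ψ) :
    volume (ψ ⁻¹' bball n m a b σ₁ σ₂) =
      volume (Metric.closedBall (0 : EuclideanSpace ℝ (Fin D)) 1) := by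
  rw [← volume_preimage_ofLp]
  refine congrArg _ (Set.ext fun x => (and_iff_right (hψ.mem_MSet x.ofLp)).trans ?_)
  rw [hψ.ip, mem_closedBall_zero_iff, EuclideanSpace.norm_eq, Real.sqrt_le_one]
  simp [sq]

lemma IsUnitaryParam.rpow_volume_ratio_mem_Icc
    (hψ : IsUnitaryParam n m D σ₁ σ₂ (MSet n m a b σ₁ σ₂) ψ)
    (hσ₁ : IsSphereMeasure n σ₁) (hσ₂ : IsSphereMeasure m σ₂) (hn : 0 < n) (hm : 0 < m)
    (ha : 0 < a) (hb : 0 < b) (hPD : 2 * biformDim n m a b ≤ D) {Q : ℝ} (hQ : 0 < Q)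
    (hPQ : biformDim n m a b ≤ D * Q) :
    (volume (ψ ⁻¹' tilde n m a b σ₁ σ₂ (SqSet n m a b)) /
        volume (ψ ⁻¹' bball n m a b σ₁ σ₂)) ^ (1 / (D : ℝ)) ∈
      Set.Icc
        (ENNReal.ofReal (a.factorial * b.factorial / (2 * √6 * 4 ^ (2 * a + 2 * b) * √Q *
          (((n : ℝ) / 2 + 2 * a) ^ a * ((m : ℝ) / 2 + 2 * b) ^ b))))
        (ENNReal.ofReal (2 * √6 * 4 ^ (2 * a + 2 * b) * √Q)) := by
  have hI := isBisphereAverage_sphereAverage hσ₁ hσ₂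
  have hφ := hψ.isMeanZeroIsometry hσ₁ hσ₂
  have hfin : Module.finrank ℝ (EuclideanSpace ℝ (Fin D)) = D := finrank_euclideanSpace_fin
  have hD : 0 < D := by
    have := biformDim_pos hn hm a b
    omega
  have : Nontrivial (EuclideanSpace ℝ (Fin D)) := Module.nontrivial_of_finrank_pos (hfin.symm ▸ hD)
  rw [← hfin] at hPD hPQ
  rw [hψ.volume_preimage_tilde_sqSet, hψ.volume_preimage_bball]
  simpa only [hfin] using rpow_measure_div_measure_closedBall_bounds volume (by positivity)
    (by positivity) (le_measure_sqSection_of_biformDim_le volume hI hn hm ha hb hφ hQ hPQ)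
    (measure_sqSection_le_of_biformDim_le volume hI hn hm ha hb hφ hPD hPQ)

end UnitaryParam

end BiformPaper

open BiformPaper in
theorem statement2_general (n m k₁ k₂ : ℕ) (hn : 2 ≤ n) (hm : 2 ≤ m) (hk₁ : 0 < k₁) (hk₂ : 0 < k₂)
    (D : ℕ)
    (hD : D = Nat.choose (n + 2 * k₁ - 1) (2 * k₁) * Nat.choose (m + 2 * k₂ - 1) (2 * k₂) - 1)
    (σ₁ : Measure (Fin n → ℝ)) (σ₂ : Measure (Fin m → ℝ))
    (hσ₁ : IsSphereMeasure n σ₁) (hσ₂ : IsSphereMeasure m σ₂)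
    (ψ : (Fin D → ℝ) →ₗ[ℝ] MvPolynomial (Fin n ⊕ Fin m) ℝ)
    (hψ : IsUnitaryParam n m D σ₁ σ₂ (MSet n m k₁ k₂ σ₁ σ₂) ψ) :
    ENNReal.ofReal
        (if k₁ = 1 ∧ k₂ = 1 then
          (2 : ℝ) ^ (-(8 : ℝ)) * (6 : ℝ) ^ (-(1 : ℝ) / 2) *
            Real.sqrt ((n : ℝ) * (m : ℝ) + (n : ℝ) + (m : ℝ)) /
              (((n : ℝ) + 4) * ((m : ℝ) + 4))
        else
          ((k₁.factorial : ℝ) * (k₂.factorial : ℝ)) ^ ((3 : ℝ) / 2) /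
              (2 * Real.sqrt 6 * (4 : ℝ) ^ (2 * k₁ + 2 * k₂) *
                Real.sqrt (((2 * k₁).factorial : ℝ) * ((2 * k₂).factorial : ℝ))) *
            ((n : ℝ) ^ ((k₁ : ℝ) / 2) * (m : ℝ) ^ ((k₂ : ℝ) / 2) /
              (((n : ℝ) / 2 + 2 * (k₁ : ℝ)) ^ k₁ * ((m : ℝ) / 2 + 2 * (k₂ : ℝ)) ^ k₂))) ≤
      (volume (⇑ψ ⁻¹' tilde n m k₁ k₂ σ₁ σ₂ (SqSet n m k₁ k₂)) /
          volume (⇑ψ ⁻¹' bball n m k₁ k₂ σ₁ σ₂)) ^ ((1 : ℝ) / (D : ℝ)) ∧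
    (volume (⇑ψ ⁻¹' tilde n m k₁ k₂ σ₁ σ₂ (SqSet n m k₁ k₂)) /
        volume (⇑ψ ⁻¹' bball n m k₁ k₂ σ₁ σ₂)) ^ ((1 : ℝ) / (D : ℝ)) ≤
      ENNReal.ofReal
        (if k₁ = 1 ∧ k₂ = 1 then
          (2 : ℝ) ^ (10 : ℕ) * Real.sqrt 6 /
            Real.sqrt ((n : ℝ) * (m : ℝ) + (n : ℝ) + (m : ℝ))
        else
          2 * Real.sqrt 6 * (4 : ℝ) ^ (2 * k₁ + 2 * k₂) *
            Real.sqrt (((2 * k₁).factorial : ℝ) * ((2 * k₂).factorial : ℝ) /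
              ((k₁.factorial : ℝ) * (k₂.factorial : ℝ))) *
            ((n : ℝ) ^ (-(k₁ : ℝ) / 2) * (m : ℝ) ^ (-(k₂ : ℝ) / 2))) := by
  subst hD
  have hratio := fun Q => hψ.rpow_volume_ratio_mem_Icc (Q := Q) hσ₁ hσ₂ (by omega) (by omega)
    hk₁ hk₂ (Nat.le_sub_one_of_lt (two_mul_biformDim_lt hn hm hk₁ hk₂))
  split_ifs with hk
  · obtain ⟨rfl, rfl⟩ := hk
    rw [lower_constant_one_one, upper_constant_one_one]
    exact hratio _ (by positivity) (biformDim_le_mul_of_one_one hn hm)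
  · rw [lower_constant, upper_constant]
    exact hratio _ (by positivity) (biformDim_le_mul hn hm hk₁ hk₂)

open BiformPaper in
/-- **Theorem (bounds on the volume of the section of sums of squares biforms).**
For integers `n, m ≥ 3` and positive integers `k₁, k₂`:
`d_{2k₁,2k₂} ≤ (Vol S̃q / Vol B_𝓜)^{1/D_𝓜} ≤ e_{2k₁,2k₂}`. -/
theorem statement2 (n m k₁ k₂ : ℕ) (hn : 3 ≤ n) (hm : 3 ≤ m) (hk₁ : 0 < k₁) (hk₂ : 0 < k₂)
    (D : ℕ)
    (hD : D = Nat.choose (n + 2 * k₁ - 1) (2 * k₁) * Nat.choose (m + 2 * k₂ - 1) (2 * k₂) - 1)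
    (σ₁ : Measure (Fin n → ℝ)) (σ₂ : Measure (Fin m → ℝ))
    (hσ₁ : IsSphereMeasure n σ₁) (hσ₂ : IsSphereMeasure m σ₂)
    (ψ : (Fin D → ℝ) →ₗ[ℝ] MvPolynomial (Fin n ⊕ Fin m) ℝ)
    (hψ : IsUnitaryParam n m D σ₁ σ₂ (MSet n m k₁ k₂ σ₁ σ₂) ψ) :
    ENNReal.ofReal
        (if k₁ = 1 ∧ k₂ = 1 then
          (2 : ℝ) ^ (-(8 : ℝ)) * (6 : ℝ) ^ (-(1 : ℝ) / 2) *
            Real.sqrt ((n : ℝ) * (m : ℝ) + (n : ℝ) + (m : ℝ)) /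
              (((n : ℝ) + 4) * ((m : ℝ) + 4))
        else
          ((k₁.factorial : ℝ) * (k₂.factorial : ℝ)) ^ ((3 : ℝ) / 2) /
              (2 * Real.sqrt 6 * (4 : ℝ) ^ (2 * k₁ + 2 * k₂) *
                Real.sqrt (((2 * k₁).factorial : ℝ) * ((2 * k₂).factorial : ℝ))) *
            ((n : ℝ) ^ ((k₁ : ℝ) / 2) * (m : ℝ) ^ ((k₂ : ℝ) / 2) /
              (((n : ℝ) / 2 + 2 * (k₁ : ℝ)) ^ k₁ * ((m : ℝ) / 2 + 2 * (k₂ : ℝ)) ^ k₂))) ≤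
      (volume (⇑ψ ⁻¹' tilde n m k₁ k₂ σ₁ σ₂ (SqSet n m k₁ k₂)) /
          volume (⇑ψ ⁻¹' bball n m k₁ k₂ σ₁ σ₂)) ^ ((1 : ℝ) / (D : ℝ)) ∧
    (volume (⇑ψ ⁻¹' tilde n m k₁ k₂ σ₁ σ₂ (SqSet n m k₁ k₂)) /
        volume (⇑ψ ⁻¹' bball n m k₁ k₂ σ₁ σ₂)) ^ ((1 : ℝ) / (D : ℝ)) ≤
      ENNReal.ofReal
        (if k₁ = 1 ∧ k₂ = 1 then
          (2 : ℝ) ^ (10 : ℕ) * Real.sqrt 6 /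
            Real.sqrt ((n : ℝ) * (m : ℝ) + (n : ℝ) + (m : ℝ))
        else
          2 * Real.sqrt 6 * (4 : ℝ) ^ (2 * k₁ + 2 * k₂) *
            Real.sqrt (((2 * k₁).factorial : ℝ) * ((2 * k₂).factorial : ℝ) /
              ((k₁.factorial : ℝ) * (k₂.factorial : ℝ))) *
            ((n : ℝ) ^ (-(k₁ : ℝ) / 2) * (m : ℝ) ^ (-(k₂ : ℝ) / 2))) :=
  statement2_general n m k₁ k₂ (by omega) (by omega) hk₁ hk₂ D hD σ₁ σ₂ hσ₁ hσ₂ ψ hψ
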